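/- arXiv:1205.7018 — 2 statements merged into one kernel-verified Lean document; each statement's English description precedes it below -/
import Mathlib

section
/- Let 0 < ε < ε₀ and f ∈ 𝔚_{ε₀}. Suppose there exists v ∈ ℝ such that: ∫_{−∞}^u f'''(t)e^{t/ε}dt ≤ 0 for all u ≤ v; ∫_u^{+∞} f'''(t)e^{−t/ε}dt ≥ 0 for all u ≥ v; and e^{−v/ε}∫_{−∞}^v f'''(t)e^{t/ε}dt + e^{v/ε}∫_v^{+∞} f'''(t)e^{−t/ε}dt = 0. Set m_R(u) = ε⁻¹e^{−u/ε}∫_{−∞}^u f'(t)e^{t/ε}dt, m_L(u) = ε⁻¹e^{u/ε}∫_u^{+∞} f'(t)e^{−t/ε}dt, α₂ = (m_L(v) − m_R(v))/(4ε), α₁ = (m_R(v) + m_L(v))/2 − v·(m_L(v) − m_R(v))/(2ε), and α₀ = v²·(m_L(v) − m_R(v))/(4ε) − v·(m_R(v) + m_L(v))/2 + f(v). Then for every x = (x₁,x₂) ∈ Ω_ε: if u_R(x) ≤ v then B_ε(x; f) = m_R(u_R(x))·(x₁ − u_R(x)) + f(u_R(x)); if u_L(x) ≤ v ≤ u_R(x)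 then B_ε(x; f) = α₁x₁ + α₂x₂ + α₀; and if v ≤ u_L(x) then B_ε(x; f) = m_L(u_L(x))·(x₁ − u_L(x)) + f(u_L(x)). -/
open MeasureTheory Set Real

/-- The average of `φ` over the interval with endpoints `a`, `b`. -/
noncomputable def intAvg (φ : ℝ → ℝ) (a b : ℝ) : ℝ := (∫ t in a..b, φ t) / (b - a)

/-- `φ` belongs to the ball of radius `ε` of (quadratic-norm) BMO on the interval `(l, r)`. -/
def memBMOe (ε l r : ℝ) (φ : ℝ → ℝ) : Prop :=
  IntegrableOn φ (Ioo l r) ∧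
  IntegrableOn (fun t => (φ t) ^ 2) (Ioo l r) ∧
  ∀ c d : ℝ, l ≤ c → c < d → d ≤ r →
    intAvg (fun t => (φ t) ^ 2) c d - (intAvg φ c d) ^ 2 ≤ ε ^ 2

/-- The Bellman function, computed with the interval `I = (0,1)`. -/
noncomputable def bellmanFn (ε : ℝ) (f : ℝ → ℝ) (x₁ x₂ : ℝ) : ℝ :=
  sSup {y | ∃ φ : ℝ → ℝ, memBMOe ε 0 1 φ ∧
    IntegrableOn (fun t => f (φ t)) (Ioo 0 1) ∧
    intAvg φ 0 1 = x₁ ∧ intAvg (fun t => (φ t) ^ 2) 0 1 = x₂ ∧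
    y = intAvg (fun t => f (φ t)) 0 1}

/-- The parabolic strip `Ω_ε`. -/
def parabStrip (ε : ℝ) : Set (ℝ × ℝ) := {x | x.1 ^ 2 ≤ x.2 ∧ x.2 ≤ x.1 ^ 2 + ε ^ 2}

/-- The parameter of the right tangent through `x`. -/
noncomputable def uRpt (ε : ℝ) (x : ℝ × ℝ) : ℝ :=
  x.1 + ε - Real.sqrt (ε ^ 2 - (x.2 - x.1 ^ 2))

/-- The parameter of the left tangent through `x`. -/
noncomputable def uLpt (ε : ℝ) (x : ℝ × ℝ) : ℝ :=
  x.1 - ε + Real.sqrt (ε ^ 2 - (x.2 - x.1 ^ 2))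

/-- The class `𝔚_{ε₀}`. -/
def memWcl (ε₀ : ℝ) (f f3 : ℝ → ℝ) : Prop :=
  ContDiff ℝ 2 f ∧
  (∀ x y : ℝ, x ≤ y → deriv (deriv f) y - deriv (deriv f) x = ∫ t in x..y, f3 t) ∧
  Integrable (fun t => f t * Real.exp (-|t| / ε₀)) ∧
  Integrable (fun t => deriv f t * Real.exp (-|t| / ε₀)) ∧
  Integrable (fun t => deriv (deriv f) t * Real.exp (-|t| / ε₀)) ∧
  Integrable (fun t => f3 t * Real.exp (-|t| / ε₀))

/-- The coefficient `m_R(u) = ε⁻¹e^{−u/ε}∫_{−∞}^u f'(t)e^{t/ε}dt`. -/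
noncomputable def mRinf (ε : ℝ) (f : ℝ → ℝ) (u : ℝ) : ℝ :=
  ε⁻¹ * Real.exp (-u / ε) * ∫ t in Iic u, deriv f t * Real.exp (t / ε)

/-- The coefficient `m_L(u) = ε⁻¹e^{u/ε}∫_u^{+∞} f'(t)e^{−t/ε}dt`. -/
noncomputable def mLinf (ε : ℝ) (f : ℝ → ℝ) (u : ℝ) : ℝ :=
  ε⁻¹ * Real.exp (u / ε) * ∫ t in Ici u, deriv f t * Real.exp (-t / ε)

/-!
The Bellman function is the least locally concave function on the parabolic strip with boundary
values `f` on the lower parabola. The strip is foliated by right tangents on the left of `v`, left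
tangents on the right of `v`, and an angle with vertex `(v, v²)` in between; the candidate is linear
along this foliation. It is read off a one-parameter family of planes, the plane with parameter `u`
touching the boundary data at `(u, u²)`, and the sign conditions on the exponential averages of the
third derivative of `f` make the family monotone in `u` in exactly the way local concavity requires.

Upper bound: a locally concave function satisfies Jensen's inequality along a BMO function. If the
BMO norm is strictly less than `ε`, every interval can be split in a controlled ratio so that the
segment joining the Bellman points of the two pieces stays in the strip, and iterating the split
gives the inequality; truncation and contraction of the function reduce the general case to this.
Lower bound: the candidate is attained at a function on `(0, 1)` that is constant except for two
logarithmic tails at the ends.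
-/

section BellmanInduction

variable {E : Type*} [NormedAddCommGroup E]

lemma exists_abs_sub_le_add_mul_norm_sub {K : Set E} (hK : IsCompact K) {G : E → ℝ}
    (hG : ContinuousOn G K) {η : ℝ} (hη : 0 < η) :
    ∃ C, 0 ≤ C ∧ ∀ x ∈ K, ∀ y ∈ K, |G x - G y| ≤ η + C * ‖x - y‖ := by
  obtain ⟨δ, hδ, hδη⟩ :=
    Metric.uniformContinuousOn_iff.1 (hK.uniformContinuousOn_of_continuous hG) η hη
  obtain ⟨B, hB⟩ := hK.exists_bound_of_continuousOn hG
  have abs_le_B {z : E} (hz : z ∈ K) : |G z| ≤ |B| := (hB z hz).trans (le_abs_self B)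
  refine ⟨2 * |B| / δ, by positivity, fun x hx y hy => ?_⟩
  rcases lt_or_ge ‖x - y‖ δ with hxy | hxy
  · have := hδη x hx y hy (by rwa [dist_eq_norm])
    rw [Real.dist_eq] at this
    exact this.le.trans (le_add_of_nonneg_right (by positivity))
  · calc |G x - G y| ≤ |G x| + |G y| := abs_sub _ _
      _ ≤ 2 * |B| := by linarith [abs_le_B hx, abs_le_B hy]
      _ = 2 * |B| / δ * δ := by field_simp
      _ ≤ 2 * |B| / δ * ‖x - y‖ := by gcongr
      _ ≤ η + 2 * |B| / δ * ‖x - y‖ := by linarith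

variable [NormedSpace ℝ E]

/-- `G` is locally concave on `Ω`: it is concave on every convex subset of `Ω`. When `Ω` is not
convex, as for the parabolic strip, this is weaker than concavity. -/
def LocallyConcaveOn (Ω : Set E) (G : E → ℝ) : Prop :=
  ∀ S ⊆ Ω, Convex ℝ S → ConcaveOn ℝ S G

/-- The point `s` cuts `[a, b]` into two pieces, each of relative length at least `τ`. -/
def IsBalancedSplit (τ a s b : ℝ) : Prop :=
  τ * (b - a) ≤ s - a ∧ τ * (b - a) ≤ b - s

/-- The amount by which Jensen's inequality for the concave function `G` fails along `Φ` on
`[a, b]`, multiplied by `b - a` so that it can be compared on adjacent intervals. -/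
noncomputable def jensenDefect (G : E → ℝ) (Φ : ℝ → E) (a b : ℝ) : ℝ :=
  (∫ t in a..b, G (Φ t)) - (b - a) * G (⨍ t in a..b, Φ t)

lemma IsBalancedSplit.lt_left {τ a s b : ℝ} (hτ : 0 < τ) (hab : a < b)
    (hs : IsBalancedSplit τ a s b) : a < s := by
  nlinarith [hs.1, mul_pos hτ (sub_pos.2 hab)]

lemma IsBalancedSplit.lt_right {τ a s b : ℝ} (hτ : 0 < τ) (hab : a < b)
    (hs : IsBalancedSplit τ a s b) : s < b := by
  nlinarith [hs.2, mul_pos hτ (sub_pos.2 hab)]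

lemma le_integral_of_balanced_splits {A : ℝ → ℝ → ℝ} {w : ℝ → ℝ} {l r τ δ : ℝ} (hlr : l < r)
    (hw : IntervalIntegrable w volume l r) (hτ : 0 < τ)
    (hsplit : ∀ a b, l ≤ a → a < b → b ≤ r →
      ∃ s, IsBalancedSplit τ a s b ∧ A a b ≤ A a s + A s b)
    (hδ : 0 < δ)
    (hshort : ∀ a b, l ≤ a → a < b → b ≤ r → b - a < δ → A a b ≤ ∫ t in a..b, w t) :
    A l r ≤ ∫ t in l..r, w t := by
  have hτ1 : τ < 1 := by
    obtain ⟨s, hs, -⟩ := hsplit l r le_rfl hlr le_rfl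
    nlinarith [hs.1, hs.lt_right hτ hlr]
  have hw' {a b : ℝ} (ha : l ≤ a) (hab : a < b) (hb : b ≤ r) : IntervalIntegrable w volume a b :=
    hw.mono_set (uIcc_of_le hab.le ▸ uIcc_of_le hlr.le ▸ Icc_subset_Icc ha hb)
  have induct (n : ℕ) : ∀ a b, l ≤ a → a < b → b ≤ r → (1 - τ) ^ n * (b - a) < δ →
      A a b ≤ ∫ t in a..b, w t := by
    induction n with
    | zero => exact fun a b ha hab hb hlen => hshort a b ha hab hb (by simpa using hlen)
    | succ n ih =>
      intro a b ha hab hb hlen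
      obtain ⟨s, hs, hA⟩ := hsplit a b ha hab hb
      have has := hs.lt_left hτ hab
      have hsb := hs.lt_right hτ hab
      have hpow : 0 ≤ (1 - τ) ^ n := pow_nonneg (by linarith) n
      have short {d : ℝ} (hd : d ≤ (1 - τ) * (b - a)) : (1 - τ) ^ n * d < δ := by
        refine (mul_le_mul_of_nonneg_left hd hpow).trans_lt ?_
        rwa [← mul_assoc, ← pow_succ]
      have hleft := ih a s ha has (hsb.le.trans hb) (short (by linarith [hs.2]))
      have hright := ih s b (ha.trans has.le) hsb hb (short (by linarith [hs.1]))
      rw [← intervalIntegral.integral_add_adjacent_intervals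
        (hw' ha has (hsb.le.trans hb)) (hw' (ha.trans has.le) hsb hb)]
      exact hA.trans (add_le_add hleft hright)
  obtain ⟨n, hn⟩ := exists_pow_lt_of_lt_one (div_pos hδ (sub_pos.2 hlr))
    (by linarith : 1 - τ < 1)
  exact induct n l r le_rfl hlr le_rfl ((lt_div_iff₀ (sub_pos.2 hlr)).1 hn)

lemma sub_smul_interval_average {a b : ℝ} (hab : a < b) (Φ : ℝ → E) :
    (b - a) • (⨍ t in a..b, Φ t) = ∫ t in a..b, Φ t := by
  rw [interval_average_eq, smul_inv_smul₀ (sub_pos.2 hab).ne']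

lemma interval_average_eq_add {Φ : ℝ → E} {a s b : ℝ} (has : a < s) (hsb : s < b)
    (hΦl : IntervalIntegrable Φ volume a s) (hΦr : IntervalIntegrable Φ volume s b) :
    (⨍ t in a..b, Φ t) = ((s - a) / (b - a)) • (⨍ t in a..s, Φ t) +
      ((b - s) / (b - a)) • (⨍ t in s..b, Φ t) := by
  rw [interval_average_eq Φ a b, ← intervalIntegral.integral_add_adjacent_intervals hΦl hΦr,
    ← sub_smul_interval_average has, ← sub_smul_interval_average hsb, smul_add, smul_smul,
    smul_smul, div_eq_inv_mul, div_eq_inv_mul]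

lemma jensenDefect_le_add {S : Set E} {G : E → ℝ} (hG : ConcaveOn ℝ S G) {Φ : ℝ → E}
    {a s b : ℝ} (has : a < s) (hsb : s < b) (hΦl : IntervalIntegrable Φ volume a s)
    (hΦr : IntervalIntegrable Φ volume s b)
    (hGl : IntervalIntegrable (fun t => G (Φ t)) volume a s)
    (hGr : IntervalIntegrable (fun t => G (Φ t)) volume s b)
    (hl : (⨍ t in a..s, Φ t) ∈ S) (hr : (⨍ t in s..b, Φ t) ∈ S) :
    jensenDefect G Φ a b ≤ jensenDefect G Φ a s + jensenDefect G Φ s b := by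
  have hab : 0 < b - a := by linarith
  have concave := hG.2 hl hr (div_nonneg (sub_nonneg.2 has.le) hab.le)
    (div_nonneg (sub_nonneg.2 hsb.le) hab.le) (by field_simp; ring)
  rw [← interval_average_eq_add has hsb hΦl hΦr, smul_eq_mul, smul_eq_mul] at concave
  have scaled := mul_le_mul_of_nonneg_left concave hab.le
  rw [mul_add, ← mul_assoc, ← mul_assoc, mul_div_cancel₀ _ hab.ne', mul_div_cancel₀ _ hab.ne']
    at scaled
  unfold jensenDefect
  rw [← intervalIntegral.integral_add_adjacent_intervals hGl hGr]
  linarith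

lemma exists_continuous_integral_norm_sub_le {Φ : ℝ → E} {l r : ℝ} (hlr : l ≤ r)
    (hΦ : IntervalIntegrable Φ volume l r) {η : ℝ} (hη : 0 < η) :
    ∃ g : ℝ → E, UniformContinuous g ∧ ∫ t in l..r, ‖Φ t - g t‖ ≤ η := by
  have hind : Integrable ((Ioc l r).indicator Φ) :=
    (integrable_indicator_iff measurableSet_Ioc).2 hΦ.1
  obtain ⟨g, hgs, hg, hgc, hgi⟩ := hind.exists_hasCompactSupport_integral_sub_le hη
  refine ⟨g, hgs.uniformContinuous_of_continuous hgc, ?_⟩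
  calc ∫ t in l..r, ‖Φ t - g t‖ = ∫ t in Ioc l r, ‖(Ioc l r).indicator Φ t - g t‖ := by
        rw [intervalIntegral.integral_of_le hlr]
        exact setIntegral_congr_fun measurableSet_Ioc fun t ht => by
          rw [indicator_of_mem ht]
    _ ≤ ∫ t, ‖(Ioc l r).indicator Φ t - g t‖ :=
        setIntegral_le_integral (hind.sub hgi).norm (.of_forall fun _ => norm_nonneg _)
    _ ≤ η := hg

variable [CompleteSpace E]

lemma integral_norm_sub_average_le {α : Type*} [MeasurableSpace α] {μ : Measure α}
    [IsFiniteMeasure μ] {Φ : α → E} (hΦ : Integrable Φ μ) (k : E) :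
    ∫ x, ‖Φ x - ⨍ y, Φ y ∂μ‖ ∂μ ≤ 2 * ∫ x, ‖Φ x - k‖ ∂μ := by
  have hk : Integrable (fun x => ‖Φ x - k‖) μ := (hΦ.sub (integrable_const k)).norm
  have mean_dev : μ.real univ * ‖k - ⨍ y, Φ y ∂μ‖ ≤ ∫ x, ‖Φ x - k‖ ∂μ := by
    calc μ.real univ * ‖k - ⨍ y, Φ y ∂μ‖ = ‖∫ x, (Φ x - k) ∂μ‖ := by
          rw [integral_sub hΦ (integrable_const k), integral_const, ← measure_smul_average μ Φ,
            ← smul_sub, norm_smul, norm_sub_rev k, norm_of_nonneg measureReal_nonneg]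
      _ ≤ _ := norm_integral_le_integral_norm _
  calc ∫ x, ‖Φ x - ⨍ y, Φ y ∂μ‖ ∂μ ≤ ∫ x, (‖Φ x - k‖ + ‖k - ⨍ y, Φ y ∂μ‖) ∂μ :=
        integral_mono (hΦ.sub (integrable_const _)).norm (hk.add (integrable_const _))
          fun x => norm_sub_le_norm_sub_add_norm_sub _ _ _
    _ = (∫ x, ‖Φ x - k‖ ∂μ) + μ.real univ * ‖k - ⨍ y, Φ y ∂μ‖ := by
        rw [integral_add hk (integrable_const _), integral_const, smul_eq_mul]
    _ ≤ 2 * ∫ x, ‖Φ x - k‖ ∂μ := by linarith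

lemma interval_average_mem {K : Set E} (hK : IsClosed K) (hKc : Convex ℝ K) {Φ : ℝ → E}
    {a b : ℝ} (hab : a < b) (hΦ : IntervalIntegrable Φ volume a b)
    (hΦK : ∀ t ∈ Ioc a b, Φ t ∈ K) : (⨍ t in a..b, Φ t) ∈ K := by
  rw [uIoc_of_le hab.le]
  exact hKc.set_average_mem hK (by simp [hab]) (by simp)
    ((ae_restrict_iff' measurableSet_Ioc).2 (.of_forall hΦK)) hΦ.1

lemma jensenDefect_le {K : Set E} (hK : IsClosed K) (hKc : Convex ℝ K) {G : E → ℝ} {η C : ℝ}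
    (hC : 0 ≤ C) (hGK : ∀ x ∈ K, ∀ y ∈ K, |G x - G y| ≤ η + C * ‖x - y‖) {Φ : ℝ → E} {a b : ℝ}
    (hab : a < b) (hΦ : IntervalIntegrable Φ volume a b) (hΦK : ∀ t ∈ Ioc a b, Φ t ∈ K)
    (hGΦ : IntervalIntegrable (fun t => G (Φ t)) volume a b) (k : E) :
    jensenDefect G Φ a b ≤ η * (b - a) + 2 * C * ∫ t in a..b, ‖Φ t - k‖ := by
  set m := ⨍ t in a..b, Φ t with hm
  have hmK : m ∈ K := interval_average_mem hK hKc hab hΦ hΦK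
  have hdev : IntervalIntegrable (fun t => ‖Φ t - m‖) volume a b :=
    (hΦ.sub intervalIntegrable_const).norm
  have dev_le : ∫ t in a..b, ‖Φ t - m‖ ≤ 2 * ∫ t in a..b, ‖Φ t - k‖ := by
    rw [intervalIntegral.integral_of_le hab.le, intervalIntegral.integral_of_le hab.le, hm,
      uIoc_of_le hab.le]
    exact integral_norm_sub_average_le hΦ.1 k
  have pointwise : ∫ t in a..b, G (Φ t) ≤ ∫ t in a..b, (G m + η + C * ‖Φ t - m‖) := by
    refine intervalIntegral.integral_mono_on_of_le_Ioo hab.le hGΦ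
      (intervalIntegrable_const.add (hdev.const_mul C)) fun t ht => ?_
    linarith [(abs_le.1 (hGK (Φ t) (hΦK t (Ioo_subset_Ioc_self ht)) m hmK)).2]
  rw [intervalIntegral.integral_add intervalIntegrable_const (hdev.const_mul C),
    intervalIntegral.integral_const, intervalIntegral.integral_const_mul, smul_eq_mul] at pointwise
  unfold jensenDefect
  linarith [mul_le_mul_of_nonneg_left dev_le hC]

lemma jensenDefect_le_of_norm_sub_le {K : Set E} (hK : IsClosed K) (hKc : Convex ℝ K)
    {G : E → ℝ} {η C : ℝ} (hC : 0 ≤ C) (hGK : ∀ x ∈ K, ∀ y ∈ K, |G x - G y| ≤ η + C * ‖x - y‖)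
    {Φ g : ℝ → E} {a b θ : ℝ} {k : E} (hab : a < b) (hΦ : IntervalIntegrable Φ volume a b)
    (hΦK : ∀ t ∈ Ioc a b, Φ t ∈ K) (hGΦ : IntervalIntegrable (fun t => G (Φ t)) volume a b)
    (hdist : IntervalIntegrable (fun t => ‖Φ t - g t‖) volume a b)
    (hg : ∀ t ∈ Ioc a b, ‖g t - k‖ ≤ θ) :
    jensenDefect G Φ a b ≤ ∫ t in a..b, (η + 2 * C * (‖Φ t - g t‖ + θ)) := by
  have hmajor : IntervalIntegrable (fun t => ‖Φ t - g t‖ + θ) volume a b :=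
    hdist.add intervalIntegrable_const
  have near_k : ∫ t in a..b, ‖Φ t - k‖ ≤ ∫ t in a..b, (‖Φ t - g t‖ + θ) := by
    refine intervalIntegral.integral_mono_on_of_le_Ioo hab.le
      (hΦ.sub intervalIntegrable_const).norm hmajor fun t ht => ?_
    exact (norm_sub_le_norm_sub_add_norm_sub _ (g t) _).trans
      (add_le_add_right (hg t (Ioo_subset_Ioc_self ht)) _)
  calc jensenDefect G Φ a b ≤ η * (b - a) + 2 * C * ∫ t in a..b, ‖Φ t - k‖ :=
        jensenDefect_le hK hKc hC hGK hab hΦ hΦK hGΦ k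
    _ ≤ η * (b - a) + 2 * C * ∫ t in a..b, (‖Φ t - g t‖ + θ) := by gcongr
    _ = ∫ t in a..b, (η + 2 * C * (‖Φ t - g t‖ + θ)) := by
        rw [intervalIntegral.integral_add intervalIntegrable_const (hmajor.const_mul _),
          intervalIntegral.integral_const, intervalIntegral.integral_const_mul, smul_eq_mul,
          mul_comm η]

/-- `Φ` admits, at every scale, a `τ`-balanced split of the interval whose two averages are joined
by a segment inside `Ω`. -/
def HasBalancedSplits (Ω : Set E) (Φ : ℝ → E) (τ l r : ℝ) : Prop :=
  ∀ a b, l ≤ a → a < b → b ≤ r →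
    ∃ s, IsBalancedSplit τ a s b ∧ segment ℝ (⨍ t in a..s, Φ t) (⨍ t in s..b, Φ t) ⊆ Ω

lemma LocallyConcaveOn.jensenDefect_le_integral {Ω : Set E} {G : E → ℝ}
    (hG : LocallyConcaveOn Ω G) {K : Set E} (hK : IsClosed K) (hKc : Convex ℝ K) {η C : ℝ}
    (hC : 0 ≤ C) (hGK : ∀ x ∈ K, ∀ y ∈ K, |G x - G y| ≤ η + C * ‖x - y‖) {Φ : ℝ → E} {l r τ : ℝ}
    (hlr : l < r) (hΦ : IntervalIntegrable Φ volume l r) (hΦK : ∀ t ∈ Ioc l r, Φ t ∈ K)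
    (hGΦ : IntervalIntegrable (fun t => G (Φ t)) volume l r) (hτ : 0 < τ)
    (hsplit : HasBalancedSplits Ω Φ τ l r) {g : ℝ → E} (hg : UniformContinuous g) {θ : ℝ}
    (hθ : 0 < θ) : jensenDefect G Φ l r ≤ ∫ t in l..r, (η + 2 * C * (‖Φ t - g t‖ + θ)) := by
  have sub {a b : ℝ} (ha : l ≤ a) (hab : a < b) (hb : b ≤ r) : uIcc a b ⊆ uIcc l r :=
    uIcc_of_le hab.le ▸ uIcc_of_le hlr.le ▸ Icc_subset_Icc ha hb
  have hdist : IntervalIntegrable (fun t => ‖Φ t - g t‖) volume l r :=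
    (hΦ.sub (hg.continuous.intervalIntegrable l r)).norm
  obtain ⟨δ, hδ, hgδ⟩ := Metric.uniformContinuous_iff.1 hg θ hθ
  refine le_integral_of_balanced_splits hlr (intervalIntegrable_const.add
    ((hdist.add intervalIntegrable_const).const_mul _)) hτ (fun a b ha hab hb => ?_) hδ
    fun a b ha hab hb hlen => ?_
  · obtain ⟨s, hs, hseg⟩ := hsplit a b ha hab hb
    have has := hs.lt_left hτ hab
    have hsb := hs.lt_right hτ hab
    have hl := sub ha has (hsb.le.trans hb)
    have hr := sub (ha.trans has.le) hsb hb
    exact ⟨s, hs, jensenDefect_le_add (hG _ hseg (convex_segment _ _)) has hsb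
      (hΦ.mono_set hl) (hΦ.mono_set hr) (hGΦ.mono_set hl) (hGΦ.mono_set hr)
      (left_mem_segment ..) (right_mem_segment ..)⟩
  · have hsub := sub ha hab hb
    refine jensenDefect_le_of_norm_sub_le hK hKc hC hGK hab (hΦ.mono_set hsub)
      (fun t ht => hΦK t ⟨ha.trans_lt ht.1, ht.2.trans hb⟩) (hGΦ.mono_set hsub)
      (hdist.mono_set hsub) (k := g a) fun t ht => ?_
    rw [← dist_eq_norm]
    refine (hgδ ?_).le
    rw [Real.dist_eq, abs_of_pos (sub_pos.2 ht.1)]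
    linarith [ht.2]

lemma LocallyConcaveOn.jensenDefect_le_mul {Ω : Set E} {G : E → ℝ} (hG : LocallyConcaveOn Ω G)
    {K : Set E} (hK : IsClosed K) (hKc : Convex ℝ K) {η C : ℝ} (hC : 0 ≤ C)
    (hGK : ∀ x ∈ K, ∀ y ∈ K, |G x - G y| ≤ η + C * ‖x - y‖) {Φ : ℝ → E} {l r τ : ℝ} (hlr : l < r)
    (hΦ : IntervalIntegrable Φ volume l r) (hΦK : ∀ t ∈ Ioc l r, Φ t ∈ K)
    (hGΦ : IntervalIntegrable (fun t => G (Φ t)) volume l r) (hτ : 0 < τ)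
    (hsplit : HasBalancedSplits Ω Φ τ l r) : jensenDefect G Φ l r ≤ η * (r - l) := by
  have approx (θ : ℝ) (hθ : 0 < θ) :
      jensenDefect G Φ l r ≤ η * (r - l) + 2 * C * (θ + θ * (r - l)) := by
    obtain ⟨g, hg, hgΦ⟩ := exists_continuous_integral_norm_sub_le hlr.le hΦ hθ
    have hdist : IntervalIntegrable (fun t => ‖Φ t - g t‖) volume l r :=
      (hΦ.sub (hg.continuous.intervalIntegrable l r)).norm
    calc jensenDefect G Φ l r ≤ ∫ t in l..r, (η + 2 * C * (‖Φ t - g t‖ + θ)) :=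
          hG.jensenDefect_le_integral hK hKc hC hGK hlr hΦ hΦK hGΦ hτ hsplit hg hθ
      _ = η * (r - l) + 2 * C * ((∫ t in l..r, ‖Φ t - g t‖) + θ * (r - l)) := by
          rw [intervalIntegral.integral_add intervalIntegrable_const
              ((hdist.add intervalIntegrable_const).const_mul _),
            intervalIntegral.integral_const_mul,
            intervalIntegral.integral_add hdist intervalIntegrable_const,
            intervalIntegral.integral_const, intervalIntegral.integral_const, smul_eq_mul,
            smul_eq_mul, mul_comm η, mul_comm θ]
      _ ≤ η * (r - l) + 2 * C * (θ + θ * (r - l)) := by gcongr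
  refine ge_of_tendsto (f := fun θ => η * (r - l) + 2 * C * (θ + θ * (r - l)))
    (x := nhdsWithin 0 (Ioi 0)) ?_ (eventually_mem_nhdsWithin.mono fun θ hθ => approx θ hθ)
  exact (Continuous.tendsto' (by fun_prop) _ _ (by ring)).mono_left nhdsWithin_le_nhds

theorem LocallyConcaveOn.integral_comp_le {Ω : Set E} {G : E → ℝ} (hG : LocallyConcaveOn Ω G)
    (hGc : Continuous G) {K : Set E} (hK : IsCompact K) (hKc : Convex ℝ K) {Φ : ℝ → E}
    {l r τ : ℝ} (hlr : l < r) (hΦ : IntervalIntegrable Φ volume l r)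
    (hΦK : ∀ t ∈ Ioc l r, Φ t ∈ K) (hτ : 0 < τ) (hsplit : HasBalancedSplits Ω Φ τ l r) :
    ∫ t in l..r, G (Φ t) ≤ (r - l) * G (⨍ t in l..r, Φ t) := by
  obtain ⟨B, hB⟩ := hK.exists_bound_of_continuousOn hGc.continuousOn
  have hGΦ : IntervalIntegrable (fun t => G (Φ t)) volume l r := by
    rw [intervalIntegrable_iff_integrableOn_Ioc_of_le hlr.le]
    exact Integrable.of_bound (hGc.comp_aestronglyMeasurable hΦ.1.aestronglyMeasurable) B
      ((ae_restrict_iff' measurableSet_Ioc).2 (.of_forall fun t ht => hB _ (hΦK t ht)))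
  suffices h : jensenDefect G Φ l r ≤ 0 from sub_nonpos.1 h
  refine le_of_forall_pos_le_add fun η hη => ?_
  obtain ⟨C, hC, hGK⟩ := exists_abs_sub_le_add_mul_norm_sub hK hGc.continuousOn
    (div_pos hη (sub_pos.2 hlr))
  have := hG.jensenDefect_le_mul hK.isClosed hKc hC hGK hlr hΦ hΦK hGΦ hτ hsplit
  rwa [div_mul_cancel₀ _ (sub_pos.2 hlr).ne', ← zero_add η] at this

end BellmanInduction

section ParabolicStrip

/-- Half the horizontal distance between the two tangency points on the upper boundary of
`parabStrip ε` of the tangent lines through `x`; thus `uRpt ε x = x.1 + ε - tangentRadius ε x` and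
`uLpt ε x = x.1 - ε + tangentRadius ε x`. -/
noncomputable def tangentRadius (ε : ℝ) (x : ℝ × ℝ) : ℝ :=
  √(ε ^ 2 - (x.2 - x.1 ^ 2))

variable {ε : ℝ} {x y z : ℝ × ℝ}

lemma uRpt_eq (ε : ℝ) (x : ℝ × ℝ) : uRpt ε x = x.1 + ε - tangentRadius ε x := rfl

lemma uLpt_eq (ε : ℝ) (x : ℝ × ℝ) : uLpt ε x = x.1 - ε + tangentRadius ε x := rfl

lemma tangentRadius_nonneg (ε : ℝ) (x : ℝ × ℝ) : 0 ≤ tangentRadius ε x := sqrt_nonneg _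

lemma tangentRadius_le (hε : 0 ≤ ε) (hx : x.1 ^ 2 ≤ x.2) : tangentRadius ε x ≤ ε :=
  (sqrt_le_left hε).2 (by linarith)

lemma sq_tangentRadius (hx : x ∈ parabStrip ε) :
    tangentRadius ε x ^ 2 = ε ^ 2 - (x.2 - x.1 ^ 2) :=
  sq_sqrt (by linarith [hx.2])

lemma continuous_tangentRadius (ε : ℝ) : Continuous (tangentRadius ε) := by
  unfold tangentRadius
  fun_prop

lemma gap_smul_add_smul {α β : ℝ} (hαβ : α + β = 1) (x y : ℝ × ℝ) :
    (α • x + β • y).2 - (α • x + β • y).1 ^ 2 =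
      α * (x.2 - x.1 ^ 2) + β * (y.2 - y.1 ^ 2) + α * β * (x.1 - y.1) ^ 2 := by
  obtain rfl : β = 1 - α := by linarith
  simp only [Prod.fst_add, Prod.snd_add, Prod.smul_fst, Prod.smul_snd, smul_eq_mul]
  ring

lemma smul_add_smul_mem_parabStrip_iff {α β : ℝ} (hα : 0 ≤ α) (hβ : 0 ≤ β) (hαβ : α + β = 1)
    (hx : x ∈ parabStrip ε) (hy : y ∈ parabStrip ε) :
    α • x + β • y ∈ parabStrip ε ↔
      α * β * (x.1 - y.1) ^ 2 ≤ α * tangentRadius ε x ^ 2 + β * tangentRadius ε y ^ 2 := by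
  have gap := gap_smul_add_smul hαβ x y
  have := mul_nonneg hα (sub_nonneg.2 hx.1)
  have := mul_nonneg hβ (sub_nonneg.2 hy.1)
  have : 0 ≤ α * β * (x.1 - y.1) ^ 2 := by positivity
  have radii : α * tangentRadius ε x ^ 2 + β * tangentRadius ε y ^ 2 =
      ε ^ 2 - (α * (x.2 - x.1 ^ 2) + β * (y.2 - y.1 ^ 2)) := by
    rw [sq_tangentRadius hx, sq_tangentRadius hy]
    linear_combination ε ^ 2 * hαβ
  constructor
  · rintro ⟨-, h⟩
    linarith
  · exact fun h => ⟨by linarith, by linarith⟩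

lemma segment_subset_parabStrip_iff (hx : x ∈ parabStrip ε) (hy : y ∈ parabStrip ε) :
    segment ℝ x y ⊆ parabStrip ε ↔ |x.1 - y.1| ≤ tangentRadius ε x + tangentRadius ε y := by
  have hρx := tangentRadius_nonneg ε x
  have hρy := tangentRadius_nonneg ε y
  set ρx := tangentRadius ε x
  set ρy := tangentRadius ε y
  constructor
  · intro hseg
    by_contra! hxy
    obtain ⟨c, hc⟩ : ∃ c, |x.1 - y.1| = (ρx + c) + (ρy + c) :=
      ⟨(|x.1 - y.1| - ρx - ρy) / 2, by ring⟩
    have hc0 : 0 < c := by linarith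
    have hsum : (ρy + c) / |x.1 - y.1| + (ρx + c) / |x.1 - y.1| = 1 := by
      rw [hc]
      field_simp
      ring
    have := (smul_add_smul_mem_parabStrip_iff (by positivity) (by positivity) hsum hx hy).1
      (hseg ⟨_, _, by positivity, by positivity, hsum, rfl⟩)
    rw [← sq_abs, hc] at this
    field_simp at this
    nlinarith [mul_pos (by positivity : 0 < ρy + c) (by positivity : 0 < c * (2 * ρx + c)),
      mul_pos (by positivity : 0 < ρx + c) (by positivity : 0 < c * (2 * ρy + c))]
  · rintro hxy _ ⟨α, β, hα, hβ, hαβ, rfl⟩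
    refine (smul_add_smul_mem_parabStrip_iff hα hβ hαβ hx hy).2 ?_
    have hsq : (x.1 - y.1) ^ 2 ≤ (ρx + ρy) ^ 2 := sq_le_sq' (abs_le.1 hxy).1 (abs_le.1 hxy).2
    calc α * β * (x.1 - y.1) ^ 2 ≤ α * β * (ρx + ρy) ^ 2 := by gcongr
      _ = α * ρx ^ 2 + β * ρy ^ 2 - (α * ρx - β * ρy) ^ 2 := by
          obtain rfl : β = 1 - α := by linarith
          ring
      _ ≤ α * ρx ^ 2 + β * ρy ^ 2 := sub_le_self _ (sq_nonneg _)

lemma segment_subset_union_of_mem {E : Type*} [AddCommGroup E] [Module ℝ E] {x y z : E}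
    (hy : y ∈ segment ℝ x z) : segment ℝ x z ⊆ segment ℝ x y ∪ segment ℝ y z := by
  obtain ⟨s, ⟨hs0, hs1⟩, rfl⟩ := segment_eq_image_lineMap ℝ x z ▸ hy
  have left : segment ℝ x (AffineMap.lineMap x z s) = AffineMap.lineMap x z '' Icc 0 s := by
    rw [← segment_eq_Icc hs0, image_segment, AffineMap.lineMap_apply_zero]
  have right : segment ℝ (AffineMap.lineMap x z s) z = AffineMap.lineMap x z '' Icc s 1 := by
    rw [← segment_eq_Icc hs1, image_segment, AffineMap.lineMap_apply_one]
  rw [left, right, ← image_union, Icc_union_Icc_eq_Icc hs0 hs1, segment_eq_image_lineMap]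

lemma exists_segment_subset_parabStrip_of_path {κ : ℝ} (hκ : 0 < κ) (hε : 0 < ε) {P Q : ℝ → ℝ × ℝ}
    (hPc : ContinuousOn P (Icc (1 / 2) 1)) (hP1 : P 1 = x)
    (hP : ∀ s ∈ Icc (1 / 2 : ℝ) 1, P s ∈ parabStrip ε ∧ κ ≤ tangentRadius ε (P s))
    (hQ : ∀ s ∈ Ico (1 / 2 : ℝ) 1, Q s ∈ parabStrip ε)
    (hPQ : ∀ s ∈ Ico (1 / 2 : ℝ) 1, x = s • P s + (1 - s) • Q s)
    (hfail : ¬ segment ℝ x (P (1 / 2)) ⊆ parabStrip ε) :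
    ∃ s ∈ Ico (1 / 2 : ℝ) 1, κ / ε ≤ 1 - s ∧ segment ℝ (P s) (Q s) ⊆ parabStrip ε := by
  obtain ⟨hx, hκx⟩ := hP1 ▸ hP 1 (by norm_num)
  rw [segment_subset_parabStrip_iff hx (hP _ (by norm_num)).1, not_le] at hfail
  have hρc : ContinuousOn (fun s => tangentRadius ε x + tangentRadius ε (P s) - |x.1 - (P s).1|)
      (Icc (1 / 2) 1) := by
    have := (continuous_tangentRadius ε).comp_continuousOn hPc
    fun_prop
  obtain ⟨s, ⟨hs, hs1⟩, hzero⟩ := intermediate_value_Icc (by norm_num) hρc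
    (show (0 : ℝ) ∈ _ from ⟨by linarith, by simp only [hP1, sub_self, abs_zero]; linarith⟩)
  have hs1 : s < 1 := hs1.lt_of_ne fun h => by
    simp only [h, hP1, sub_self, abs_zero] at hzero
    linarith
  obtain ⟨hPs, hκP⟩ := hP s ⟨hs, hs1.le⟩
  have hQs := hQ s ⟨hs, hs1⟩
  have hx_eq := hPQ s ⟨hs, hs1⟩
  set D := |(P s).1 - (Q s).1|
  have hD : |x.1 - (P s).1| = (1 - s) * D := by
    have : x.1 - (P s).1 = -((1 - s) * ((P s).1 - (Q s).1)) := by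
      rw [hx_eq]
      simp only [Prod.fst_add, Prod.smul_fst, smul_eq_mul]
      ring
    rw [this, abs_neg, abs_mul, abs_of_pos (sub_pos.2 hs1)]
  have hρP : tangentRadius ε (P s) = (1 - s) * D - tangentRadius ε x := by linarith
  have hρQ : tangentRadius ε (Q s) = tangentRadius ε x + s * D := by
    have hD0 : 0 ≤ s * D := mul_nonneg (by linarith) (abs_nonneg _)
    refine (sq_eq_sq₀ (tangentRadius_nonneg _ _)
      (add_nonneg (tangentRadius_nonneg _ _) hD0)).1 (mul_left_cancel₀ (sub_pos.2 hs1).ne' ?_)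
    have gap := gap_smul_add_smul (add_sub_cancel s 1) (P s) (Q s)
    rw [← hx_eq, ← sq_abs ((P s).1 - (Q s).1)] at gap
    have hρP2 := sq_tangentRadius hPs
    rw [hρP] at hρP2
    linear_combination (1 - s) * sq_tangentRadius hQs - sq_tangentRadius hx + s * hρP2 + gap
  refine ⟨s, ⟨hs, hs1⟩, ?_, (segment_subset_parabStrip_iff hPs hQs).2 (by linarith)⟩
  rw [div_le_iff₀ hε]
  nlinarith [tangentRadius_le hε.le hPs.1, tangentRadius_le hε.le hQs.1]

lemma continuousOn_interval_average_right {E : Type*} [NormedAddCommGroup E] [NormedSpace ℝ E]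
    {Φ : ℝ → E} {a b : ℝ} (hΦ : IntervalIntegrable Φ volume a b) :
    ContinuousOn (fun s => ⨍ t in a..s, Φ t) (uIcc a b \ {a}) := by
  simp only [interval_average_eq]
  refine ContinuousOn.smul (ContinuousOn.inv₀ (by fun_prop) fun s hs => sub_ne_zero.2 hs.2) ?_
  exact (intervalIntegral.continuousOn_primitive_interval
    ((intervalIntegrable_iff' (by simp)).1 hΦ)).mono sdiff_subset

lemma interval_average_comp_sub_left {E : Type*} [NormedAddCommGroup E] [NormedSpace ℝ E]
    (Φ : ℝ → E) (a b c : ℝ) : (⨍ t in a..b, Φ (c - t)) = ⨍ t in c - b..c - a, Φ t := by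
  rw [interval_average_eq, interval_average_eq, intervalIntegral.integral_comp_sub_left,
    sub_sub_sub_cancel_left]

section Splitting

variable {κ a b : ℝ} {Φ : ℝ → ℝ × ℝ}

lemma exists_isBalancedSplit_of_left (hκ : 0 < κ) (hε : 0 < ε) (hab : a < b)
    (hΦ : IntervalIntegrable Φ volume a b)
    (havg : ∀ c d, a ≤ c → c < d → d ≤ b →
      (⨍ t in c..d, Φ t) ∈ parabStrip ε ∧ κ ≤ tangentRadius ε (⨍ t in c..d, Φ t))
    (hfail : ¬ segment ℝ (⨍ t in a..b, Φ t) (⨍ t in a..(a + b) / 2, Φ t) ⊆ parabStrip ε) :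
    ∃ s, IsBalancedSplit (min (1 / 2) (κ / ε)) a s b ∧
      segment ℝ (⨍ t in a..s, Φ t) (⨍ t in s..b, Φ t) ⊆ parabStrip ε := by
  have hba : 0 < b - a := sub_pos.2 hab
  have path_mem {s : ℝ} (hs : s ∈ Icc (1 / 2 : ℝ) 1) : a + s * (b - a) ∈ uIcc a b \ {a} := by
    rw [uIcc_of_le hab.le]
    exact ⟨⟨by nlinarith [hs.1], by nlinarith [hs.2]⟩, ne_of_gt (by nlinarith [hs.1])⟩
  have path_split (s : ℝ) (hs : s ∈ Ico (1 / 2 : ℝ) 1) : (⨍ t in a..b, Φ t) =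
      s • (⨍ t in a..a + s * (b - a), Φ t) + (1 - s) • (⨍ t in a + s * (b - a)..b, Φ t) := by
    have hmem := (path_mem (Ico_subset_Icc_self hs)).1
    rw [interval_average_eq_add (s := a + s * (b - a)) (by nlinarith [hs.1])
      (by nlinarith [hs.2]) (hΦ.mono_set (uIcc_subset_uIcc left_mem_uIcc hmem))
      (hΦ.mono_set (uIcc_subset_uIcc hmem right_mem_uIcc))]
    congr 2 <;> field_simp <;> ring
  obtain ⟨s, ⟨hs, -⟩, hκs, hseg⟩ := exists_segment_subset_parabStrip_of_path (ε := ε) hκ hε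
    (x := ⨍ t in a..b, Φ t) (P := fun s => ⨍ t in a..a + s * (b - a), Φ t)
    (Q := fun s => ⨍ t in a + s * (b - a)..b, Φ t)
    ((continuousOn_interval_average_right hΦ).comp (by fun_prop) fun s hs => path_mem hs)
    (by simp only [one_mul, add_sub_cancel])
    (fun s hs => havg _ _ le_rfl (by nlinarith [hs.1]) (by nlinarith [hs.2]))
    (fun s hs => (havg _ _ (by nlinarith [hs.1]) (by nlinarith [hs.2]) le_rfl).1)
    path_split (by rwa [show a + 1 / 2 * (b - a) = (a + b) / 2 by ring])
  exact ⟨a + s * (b - a), ⟨by nlinarith [min_le_left (1 / 2) (κ / ε)],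
    by nlinarith [min_le_right (1 / 2) (κ / ε)]⟩, hseg⟩

lemma exists_isBalancedSplit_of_right (hκ : 0 < κ) (hε : 0 < ε) (hab : a < b)
    (hΦ : IntervalIntegrable Φ volume a b)
    (havg : ∀ c d, a ≤ c → c < d → d ≤ b →
      (⨍ t in c..d, Φ t) ∈ parabStrip ε ∧ κ ≤ tangentRadius ε (⨍ t in c..d, Φ t))
    (hfail : ¬ segment ℝ (⨍ t in a..b, Φ t) (⨍ t in (a + b) / 2..b, Φ t) ⊆ parabStrip ε) :
    ∃ s, IsBalancedSplit (min (1 / 2) (κ / ε)) a s b ∧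
      segment ℝ (⨍ t in a..s, Φ t) (⨍ t in s..b, Φ t) ⊆ parabStrip ε := by
  obtain ⟨s, ⟨hsl, hsr⟩, hseg⟩ := exists_isBalancedSplit_of_left (Φ := fun t => Φ (a + b - t))
    hκ hε hab (by simpa using (hΦ.comp_sub_left (a + b)).symm)
    (fun c d hc hcd hd => by
      rw [interval_average_comp_sub_left]
      exact havg _ _ (by linarith) (by linarith) (by linarith))
    (by
      rwa [interval_average_comp_sub_left, interval_average_comp_sub_left, add_sub_cancel_right,
        add_sub_cancel_left, show a + b - (a + b) / 2 = (a + b) / 2 by ring])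
  rw [interval_average_comp_sub_left, interval_average_comp_sub_left, add_sub_cancel_right,
    add_sub_cancel_left, segment_symm] at hseg
  exact ⟨a + b - s, ⟨by linarith, by linarith⟩, hseg⟩

end Splitting

lemma hasBalancedSplits_parabStrip {κ l r : ℝ} (hκ : 0 < κ) (hε : 0 < ε) {Φ : ℝ → ℝ × ℝ}
    (hΦ : IntervalIntegrable Φ volume l r)
    (havg : ∀ a b, l ≤ a → a < b → b ≤ r →
      (⨍ t in a..b, Φ t) ∈ parabStrip ε ∧ κ ≤ tangentRadius ε (⨍ t in a..b, Φ t)) :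
    HasBalancedSplits (parabStrip ε) Φ (min (1 / 2) (κ / ε)) l r := by
  intro a b ha hab hb
  have sub {c d : ℝ} (hc : l ≤ c) (hcd : c ≤ d) (hd : d ≤ r) : IntervalIntegrable Φ volume c d :=
    hΦ.mono_set (uIcc_of_le hcd ▸ uIcc_of_le (hc.trans (hcd.trans hd)) ▸ Icc_subset_Icc hc hd)
  have havg' (c d : ℝ) (hc : a ≤ c) (hcd : c < d) (hd : d ≤ b) :=
    havg c d (ha.trans hc) hcd (hd.trans hb)
  by_cases hleft : segment ℝ (⨍ t in a..b, Φ t) (⨍ t in a..(a + b) / 2, Φ t) ⊆ parabStrip ε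
  swap
  · exact exists_isBalancedSplit_of_left hκ hε hab (sub ha hab.le hb) havg' hleft
  by_cases hright : segment ℝ (⨍ t in a..b, Φ t) (⨍ t in (a + b) / 2..b, Φ t) ⊆ parabStrip ε
  swap
  · exact exists_isBalancedSplit_of_right hκ hε hab (sub ha hab.le hb) havg' hright
  have hτ := min_le_left (1 / 2) (κ / ε)
  refine ⟨(a + b) / 2, ⟨by nlinarith, by nlinarith⟩, ?_⟩
  have hmid : (⨍ t in a..b, Φ t) ∈ segment ℝ (⨍ t in a..(a + b) / 2, Φ t)
      (⨍ t in (a + b) / 2..b, Φ t) := by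
    rw [interval_average_eq_add (s := (a + b) / 2) (by linarith) (by linarith)
      (sub ha (by linarith) (by linarith)) (sub (by linarith) (by linarith) hb)]
    have hba : 0 < b - a := sub_pos.2 hab
    exact ⟨_, _, div_nonneg (by linarith) hba.le, div_nonneg (by linarith) hba.le,
      by field_simp; ring, rfl⟩
  exact (segment_subset_union_of_mem hmid).trans
    (union_subset (by rwa [segment_symm]) hright)

end ParabolicStrip

section Truncation

open Filter Topology

variable {ν : Measure ℝ} [IsFiniteMeasure ν] {g h : ℝ → ℝ}

lemma tendsto_measure_Ici_atTop_zero (ν : Measure ℝ) [IsFiniteMeasure ν] :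
    Tendsto (fun n : ℝ => ν (Ici n)) atTop (𝓝 0) := by
  have := tendsto_measure_iInter_atTop (μ := ν) (s := fun n : ℝ => Ici n)
    (fun n => measurableSet_Ici.nullMeasurableSet) (fun _ _ hab => Ici_subset_Ici.2 hab)
    ⟨0, measure_ne_top _ _⟩
  have empty : (⋂ n : ℝ, Ici n) = ∅ :=
    eq_empty_of_forall_notMem fun x hx => (lt_add_one x).not_ge (mem_iInter.1 hx (x + 1))
  rwa [empty, measure_empty] at this

-- The level minimises `|h|` over a range `[N, M)` carrying at least half of the mass of `[N, ∞)`.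
lemma exists_ge_abs_mul_measureReal_Ici_le (hh : Continuous h) (hi : Integrable h ν) (N : ℝ) :
    ∃ b, N ≤ b ∧ |h b| * ν.real (Ici b) ≤ 2 * ∫ x in Ici N, |h x| ∂ν := by
  obtain ⟨M, hNM, hM⟩ : ∃ M, N ≤ M ∧ ν.real (Ici M) ≤ ν.real (Ici N) / 2 := by
    rcases (measureReal_nonneg (μ := ν) (s := Ici N)).eq_or_lt with zero | pos
    · exact ⟨N, le_rfl, by rw [← zero, zero_div]⟩
    · have tail : Tendsto (fun n : ℝ => ν.real (Ici n)) atTop (𝓝 0) :=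
        (ENNReal.tendsto_toReal ENNReal.zero_ne_top).comp (tendsto_measure_Ici_atTop_zero ν)
      obtain ⟨M, hM, hNM⟩ :=
        ((tail.eventually_le_const (half_pos pos)).and (eventually_ge_atTop N)).exists
      exact ⟨M, hNM, hM⟩
  obtain ⟨b, ⟨hNb, -⟩, hb⟩ := isCompact_Icc.exists_isMinOn (nonempty_Icc.2 hNM)
    hh.abs.continuousOn
  refine ⟨b, hNb, ?_⟩
  have half_mass : ν.real (Ici N) ≤ 2 * ν.real (Ico N M) := by
    rw [← Ici_sdiff_Ici, measureReal_sdiff (Ici_subset_Ici.2 hNM) measurableSet_Ici]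
    linarith
  have minimality : |h b| * ν.real (Ico N M) ≤ ∫ x in Ico N M, |h x| ∂ν :=
    setIntegral_ge_of_const_le_real measurableSet_Ico (measure_ne_top _ _)
      (fun x hx => hb (Ico_subset_Icc_self hx)) hi.abs.integrableOn
  calc |h b| * ν.real (Ici b) ≤ |h b| * (2 * ν.real (Ico N M)) := by
        gcongr
        exact (measureReal_mono (Ici_subset_Ici.2 hNb)).trans half_mass
    _ ≤ 2 * ∫ x in Ico N M, |h x| ∂ν := by linarith
    _ ≤ 2 * ∫ x in Ici N, |h x| ∂ν := by
        gcongr 2 * ?_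
        exact setIntegral_mono_set hi.abs.integrableOn (ae_of_all _ fun x => abs_nonneg _)
          Ico_subset_Ici_self.eventuallyLE

lemma exists_tendsto_atTop_mul_measureReal_Ici (hh : Continuous h) (hi : Integrable h ν) :
    ∃ b : ℕ → ℝ, Tendsto b atTop atTop ∧
      Tendsto (fun k => |h (b k)| * ν.real (Ici (b k))) atTop (𝓝 0) := by
  choose b hkb hb using fun k : ℕ => exists_ge_abs_mul_measureReal_Ici_le hh hi k
  refine ⟨b, tendsto_atTop_mono hkb tendsto_natCast_atTop_atTop, ?_⟩
  have tail : Tendsto (fun k : ℕ => 2 * ∫ x in Ici (k : ℝ), |h x| ∂ν) atTop (𝓝 (2 * 0)) :=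
    (hi.abs.tendsto_setIntegral_nhds_zero
      ((tendsto_measure_Ici_atTop_zero ν).comp tendsto_natCast_atTop_atTop)).const_mul 2
  rw [mul_zero] at tail
  exact squeeze_zero (fun k => by positivity) hb tail

lemma exists_tendsto_atBot_mul_measureReal_Iic (hh : Continuous h) (hi : Integrable h ν) :
    ∃ a : ℕ → ℝ, Tendsto a atTop atBot ∧
      Tendsto (fun k => |h (a k)| * ν.real (Iic (a k))) atTop (𝓝 0) := by
  have reflected : Integrable (fun x => h (-x)) (ν.map Neg.neg) :=
    (integrable_map_measure (by fun_prop) (by fun_prop)).2 (by simpa [Function.comp_def] using hi)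
  obtain ⟨b, hb, lim⟩ :=
    exists_tendsto_atTop_mul_measureReal_Ici (hh.comp continuous_neg) reflected
  refine ⟨fun k => -b k, tendsto_neg_atTop_atBot.comp hb, ?_⟩
  simpa only [map_measureReal_apply measurable_neg measurableSet_Ici, neg_preimage, neg_Ici,
    Function.comp_apply] using lim

lemma integral_clip {a b : ℝ} (hab : a < b) (hgi : Integrable g ν) :
    ∫ x, g (max a (min b x)) ∂ν =
      g a * ν.real (Iic a) + (∫ x in Ioo a b, g x ∂ν) + g b * ν.real (Ici b) := by
  have pieces : (fun x => g (max a (min b x))) = (Iic a).indicator (fun _ => g a) +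
      (Ioo a b).indicator g + (Ici b).indicator (fun _ => g b) := by
    funext x
    rcases le_or_gt x a with hxa | hxa
    · simp [hxa, hxa.not_gt, (hxa.trans_lt hab).not_ge, (hxa.trans hab.le)]
    · rcases le_or_gt b x with hbx | hbx
      · simp [hbx, hbx.not_gt, hxa.not_ge, hab.le]
      · simp [hxa, hbx, hxa.not_ge, hbx.not_ge, hxa.le, hbx.le]
  have left_int := (integrable_const (μ := ν) (g a)).indicator (measurableSet_Iic (a := a))
  have mid_int := hgi.indicator (measurableSet_Ioo (a := a) (b := b))
  have right_int := (integrable_const (μ := ν) (g b)).indicator (measurableSet_Ici (a := b))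
  rw [pieces, integral_add' (left_int.add mid_int) right_int, integral_add' left_int mid_int,
    integral_indicator measurableSet_Iic, integral_indicator measurableSet_Ioo,
    integral_indicator measurableSet_Ici, setIntegral_const, setIntegral_const, smul_eq_mul,
    smul_eq_mul, mul_comm (g a), mul_comm (g b)]

theorem exists_clip_tendsto_integral (hh : Continuous h) (hi : Integrable h ν) :
    ∃ a b : ℕ → ℝ, ∀ g : ℝ → ℝ, Continuous g → (∀ x, |g x| ≤ h x) →
      Tendsto (fun k => ∫ x, g (max (a k) (min (b k) x)) ∂ν) atTop (𝓝 (∫ x, g x ∂ν)) := by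
  obtain ⟨a, ha, lim_a⟩ := exists_tendsto_atBot_mul_measureReal_Iic hh hi
  obtain ⟨b, hb, lim_b⟩ := exists_tendsto_atTop_mul_measureReal_Ici hh hi
  refine ⟨a, b, fun g hg hgh => ?_⟩
  have hgi : Integrable g ν := hi.mono' hg.aestronglyMeasurable (ae_of_all _ hgh)
  have edge {c : ℕ → ℝ} {S : ℝ → Set ℝ}
      (lim : Tendsto (fun k => |h (c k)| * ν.real (S (c k))) atTop (𝓝 0)) :
      Tendsto (fun k => g (c k) * ν.real (S (c k))) atTop (𝓝 0) := by
    refine squeeze_zero_norm (fun k => ?_) lim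
    rw [norm_mul, norm_of_nonneg measureReal_nonneg]
    gcongr
    exact (hgh _).trans (le_abs_self _)
  have middle := (aecover_Ioo (μ := ν) ha hb).integral_tendsto_of_countably_generated hgi
  have limit := ((edge lim_a).add middle).add (edge lim_b)
  rw [zero_add, add_zero] at limit
  refine limit.congr' ?_
  filter_upwards [ha.eventually_lt_atBot 0, hb.eventually_gt_atTop 0] with k hak hbk
  exact (integral_clip (hak.trans hbk) hgi).symm

end Truncation

section BMO

open Filter Topology

/-- The Bellman point of `φ` on the interval with endpoints `c`, `d`: the averages of `φ` and of its
square. For `φ` in the BMO ball of radius `ε` it lies in `parabStrip ε`. -/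
noncomputable def bmoPoint (φ : ℝ → ℝ) (c d : ℝ) : ℝ × ℝ :=
  (intAvg φ c d, intAvg (fun t => φ t ^ 2) c d)

variable {ε δ l r c d : ℝ} {φ : ℝ → ℝ}

lemma interval_average_prodMk_sq (hφ : IntervalIntegrable φ volume c d)
    (hφ2 : IntervalIntegrable (fun t => φ t ^ 2) volume c d) :
    (⨍ t in c..d, (φ t, φ t ^ 2)) = bmoPoint φ c d := by
  rw [interval_average_eq, intervalIntegral, integral_pair hφ.1 hφ2.1, integral_pair hφ.2 hφ2.2]
  simp only [bmoPoint, intAvg, intervalIntegral, Prod.mk_sub_mk, Prod.smul_mk, smul_eq_mul,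
    div_eq_inv_mul]

lemma continuousAt_intervalIntegral_comp_mul {g : ℝ → ℝ} {M : ℝ} (hg : Continuous g)
    (hφ : AEStronglyMeasurable φ (volume.restrict (uIoc c d))) (hM : ∀ t, |φ t| ≤ M) (s : ℝ) :
    ContinuousAt (fun s => ∫ t in c..d, g (s * φ t)) s := by
  obtain ⟨C, hC⟩ := (isCompact_Icc (a := -((|s| + 1) * M)) (b := (|s| + 1) * M)
    ).exists_bound_of_continuousOn hg.continuousOn
  refine intervalIntegral.continuousAt_of_dominated_interval (bound := fun _ => C)
    (Eventually.of_forall fun k => ?_) ?_ intervalIntegrable_const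
    (ae_of_all _ fun t _ => by fun_prop)
  · exact (by fun_prop : Continuous fun x : ℝ => g (k * x)).comp_aestronglyMeasurable hφ
  · filter_upwards [continuous_abs.continuousAt.eventually_le_const (lt_add_one |s|)] with k hk
    refine ae_of_all _ fun t _ => hC _ (abs_le.1 ?_)
    rw [abs_mul]
    exact mul_le_mul hk (hM t) (abs_nonneg _) (by positivity)

lemma bmoPoint_add_const_mul (hcd : c < d) (hφ : IntervalIntegrable φ volume c d)
    (hφ2 : IntervalIntegrable (fun t => φ t ^ 2) volume c d) (u k : ℝ) :
    bmoPoint (fun t => u + k * φ t) c d =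
      (u + k * (bmoPoint φ c d).1,
        u ^ 2 + 2 * u * k * (bmoPoint φ c d).1 + k ^ 2 * (bmoPoint φ c d).2) := by
  have hdc : d - c ≠ 0 := (sub_pos.2 hcd).ne'
  have expand (t : ℝ) : (u + k * φ t) ^ 2 = u ^ 2 + 2 * u * k * φ t + k ^ 2 * φ t ^ 2 := by ring
  have const_int (w : ℝ) : IntervalIntegrable (fun _ : ℝ => w) volume c d :=
    intervalIntegrable_const
  simp only [bmoPoint, intAvg, expand]
  rw [intervalIntegral.integral_add (const_int u) (hφ.const_mul k),
    intervalIntegral.integral_add ((const_int (u ^ 2)).add (hφ.const_mul _)) (hφ2.const_mul _),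
    intervalIntegral.integral_add (const_int (u ^ 2)) (hφ.const_mul _)]
  simp only [intervalIntegral.integral_const_mul, intervalIntegral.integral_const, smul_eq_mul,
    Prod.mk.injEq]
  constructor <;> field_simp

lemma intAvg_sub_sq (hcd : c < d) (hφ : IntervalIntegrable φ volume c d)
    (hφ2 : IntervalIntegrable (fun t => φ t ^ 2) volume c d) (k : ℝ) :
    intAvg (fun t => (φ t - k) ^ 2) c d =
      (bmoPoint φ c d).2 - (bmoPoint φ c d).1 ^ 2 + ((bmoPoint φ c d).1 - k) ^ 2 := by
  have := congrArg Prod.snd (bmoPoint_add_const_mul hcd hφ hφ2 (-k) 1)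
  simp only [bmoPoint, one_mul, neg_add_eq_sub] at this ⊢
  linarith

lemma intAvg_mono {φ ψ : ℝ → ℝ} (hcd : c < d) (hφ : IntervalIntegrable φ volume c d)
    (hψ : IntervalIntegrable ψ volume c d) (h : ∀ t, φ t ≤ ψ t) :
    intAvg φ c d ≤ intAvg ψ c d :=
  div_le_div_of_nonneg_right (intervalIntegral.integral_mono hcd.le hφ hψ h) (sub_pos.2 hcd).le

namespace memBMOe

lemma intervalIntegrable (hφ : memBMOe ε l r φ) (hlc : l ≤ c) (hcd : c ≤ d) (hdr : d ≤ r) :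
    IntervalIntegrable φ volume c d :=
  (intervalIntegrable_iff_integrableOn_Ioo_of_le hcd).2 (hφ.1.mono_set (Ioo_subset_Ioo hlc hdr))

lemma intervalIntegrable_sq (hφ : memBMOe ε l r φ) (hlc : l ≤ c) (hcd : c ≤ d) (hdr : d ≤ r) :
    IntervalIntegrable (fun t => φ t ^ 2) volume c d :=
  (intervalIntegrable_iff_integrableOn_Ioo_of_le hcd).2 (hφ.2.1.mono_set (Ioo_subset_Ioo hlc hdr))

lemma bmoPoint_mem_parabStrip (hφ : memBMOe ε l r φ) (hlc : l ≤ c) (hcd : c < d) (hdr : d ≤ r) :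
    bmoPoint φ c d ∈ parabStrip ε := by
  have variance := intAvg_sub_sq hcd (hφ.intervalIntegrable hlc hcd.le hdr)
    (hφ.intervalIntegrable_sq hlc hcd.le hdr) (bmoPoint φ c d).1
  have variance_nonneg : 0 ≤ intAvg (fun t => (φ t - (bmoPoint φ c d).1) ^ 2) c d :=
    div_nonneg (intervalIntegral.integral_nonneg hcd.le fun t _ => sq_nonneg _)
      (sub_pos.2 hcd).le
  have bound := hφ.2.2 c d hlc hcd hdr
  exact ⟨by linarith, by simp only [bmoPoint]; linarith⟩

lemma add_const_mul (hφ : memBMOe ε l r φ) (u k : ℝ) :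
    memBMOe (k * ε) l r (fun t => u + k * φ t) := by
  refine ⟨(integrable_const u).add (hφ.1.const_mul k), ?_, fun c d hlc hcd hdr => ?_⟩
  · refine (((integrable_const (u ^ 2)).add (hφ.1.const_mul (2 * u * k))).add
      (hφ.2.1.const_mul (k ^ 2))).congr (ae_of_all _ fun t => ?_)
    simp only [Pi.add_apply]
    ring
  · have point := bmoPoint_add_const_mul hcd (hφ.intervalIntegrable hlc hcd.le hdr)
      (hφ.intervalIntegrable_sq hlc hcd.le hdr) u k
    have bound := hφ.2.2 c d hlc hcd hdr
    simp only [bmoPoint, Prod.mk.injEq] at point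
    rw [point.1, point.2]
    nlinarith [mul_le_mul_of_nonneg_left bound (sq_nonneg k)]

lemma memLp_two (hφ : memBMOe ε l r φ) : MemLp φ 2 (volume.restrict (Ioo l r)) :=
  (memLp_two_iff_integrable_sq hφ.1.aestronglyMeasurable).2 hφ.2.1

lemma comp_lipschitz {T : ℝ → ℝ} (hT : LipschitzWith 1 T) (hφ : memBMOe ε l r φ) :
    memBMOe ε l r (fun t => T (φ t)) := by
  have hTφ : MemLp (fun t => T (φ t)) 2 (volume.restrict (Ioo l r)) := by
    have centred : MemLp (fun t => T (φ t) - T 0) 2 (volume.restrict (Ioo l r)) :=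
      hφ.memLp_two.mono ((hT.continuous.comp_aestronglyMeasurable
        hφ.1.aestronglyMeasurable).sub aestronglyMeasurable_const)
        (ae_of_all _ fun t => by simpa using hT.norm_sub_le (φ t) 0)
    simpa [Pi.add_def] using centred.add (memLp_const (T 0))
  have integrable_sub_sq {ψ : ℝ → ℝ} (hψ : MemLp ψ 2 (volume.restrict (Ioo l r))) (k : ℝ) :
      IntegrableOn (fun t => (ψ t - k) ^ 2) (Ioo l r) :=
    (hψ.sub (memLp_const k)).integrable_sq
  refine ⟨hTφ.integrable one_le_two, hTφ.integrable_sq, fun c d hlc hcd hdr => ?_⟩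
  have restrict {ψ : ℝ → ℝ} (hψ : IntegrableOn ψ (Ioo l r)) : IntervalIntegrable ψ volume c d :=
    (intervalIntegrable_iff_integrableOn_Ioo_of_le hcd.le).2
      (hψ.mono_set (Ioo_subset_Ioo hlc hdr))
  set m := (bmoPoint φ c d).1
  have varφ := intAvg_sub_sq hcd (restrict hφ.1) (restrict hφ.2.1) m
  have varTφ := intAvg_sub_sq hcd (restrict (hTφ.integrable one_le_two))
    (restrict hTφ.integrable_sq) (T m)
  have contraction := intAvg_mono hcd (restrict (integrable_sub_sq hTφ (T m)))
    (restrict (integrable_sub_sq hφ.memLp_two m))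
    (fun t => sq_le_sq.2 (by simpa [Real.dist_eq] using hT.dist_le_mul (φ t) m))
  have bound := hφ.2.2 c d hlc hcd hdr
  simp only [bmoPoint, m] at varφ varTφ contraction bound
  nlinarith [sq_nonneg (intAvg (fun t => T (φ t)) c d - T (intAvg φ c d))]

section UpperBound

variable {G : ℝ × ℝ → ℝ} {M : ℝ}

lemma intAvg_le_of_sq_lt (hφ : memBMOe δ l r φ) (hlr : l < r) (hδ : δ ^ 2 < ε ^ 2) (hε : 0 < ε)
    (hM : ∀ t, |φ t| ≤ M) (hG : LocallyConcaveOn (parabStrip ε) G) (hGc : Continuous G) :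
    intAvg (fun t => G (φ t, φ t ^ 2)) l r ≤ G (bmoPoint φ l r) := by
  have average {c d : ℝ} (hlc : l ≤ c) (hcd : c < d) (hdr : d ≤ r) :
      (⨍ t in c..d, (φ t, φ t ^ 2)) = bmoPoint φ c d :=
    interval_average_prodMk_sq (hφ.intervalIntegrable hlc hcd.le hdr)
      (hφ.intervalIntegrable_sq hlc hcd.le hdr)
  have hΦ : IntervalIntegrable (fun t => (φ t, φ t ^ 2)) volume l r :=
    (intervalIntegrable_iff_integrableOn_Ioo_of_le hlr.le).2 (hφ.1.prodMk hφ.2.1)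
  have splits := hasBalancedSplits_parabStrip (κ := √(ε ^ 2 - δ ^ 2)) (ε := ε)
    (sqrt_pos.2 (sub_pos.2 hδ)) hε hΦ fun c d hlc hcd hdr => by
      rw [average hlc hcd hdr]
      obtain ⟨lower, upper⟩ := hφ.bmoPoint_mem_parabStrip hlc hcd hdr
      exact ⟨⟨lower, by linarith⟩, sqrt_le_sqrt (by linarith)⟩
  have bound := hG.integral_comp_le hGc ((isCompact_Icc (a := -M) (b := M)).prod isCompact_Icc)
    ((convex_Icc _ _).prod (convex_Icc 0 (M ^ 2))) hlr hΦ
    (fun t _ => ⟨abs_le.1 (hM t), sq_nonneg _, sq_le_sq' (abs_le.1 (hM t)).1 (abs_le.1 (hM t)).2⟩)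
    (by positivity) splits
  rw [average le_rfl hlr le_rfl] at bound
  exact (div_le_iff₀' (sub_pos.2 hlr)).2 bound

-- `s * φ` lies in the BMO ball of radius `s * ε`, strictly smaller than `ε` when `s < 1`.
lemma intAvg_le_of_bounded (hφ : memBMOe ε l r φ) (hlr : l < r) (hε : 0 < ε)
    (hM : ∀ t, |φ t| ≤ M) (hG : LocallyConcaveOn (parabStrip ε) G) (hGc : Continuous G) :
    intAvg (fun t => G (φ t, φ t ^ 2)) l r ≤ G (bmoPoint φ l r) := by
  have scaled (s : ℝ) : memBMOe (s * ε) l r (fun t => s * φ t) := by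
    simpa only [zero_add] using hφ.add_const_mul 0 s
  have point (s : ℝ) : bmoPoint (fun t => s * φ t) l r =
      (s * (bmoPoint φ l r).1, s ^ 2 * (bmoPoint φ l r).2) := by
    simpa using bmoPoint_add_const_mul hlr (hφ.intervalIntegrable le_rfl hlr.le le_rfl)
      (hφ.intervalIntegrable_sq le_rfl hlr.le le_rfl) 0 s
  have lim_left : Tendsto (fun s : ℝ => intAvg (fun t => G (s * φ t, (s * φ t) ^ 2)) l r)
      (𝓝[Ioo 0 1] 1) (𝓝 (intAvg (fun t => G (φ t, φ t ^ 2)) l r)) := by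
    have := continuousAt_intervalIntegral_comp_mul (g := fun x => G (x, x ^ 2)) (by fun_prop)
      (hφ.intervalIntegrable le_rfl hlr.le le_rfl).def'.aestronglyMeasurable hM 1
    simpa only [one_mul, intAvg] using (this.tendsto.mono_left nhdsWithin_le_nhds).div_const (r - l)
  have lim_right : Tendsto (fun s : ℝ => G (bmoPoint (fun t => s * φ t) l r)) (𝓝[Ioo 0 1] 1)
      (𝓝 (G (bmoPoint φ l r))) := by
    simp only [point]
    refine tendsto_nhdsWithin_of_tendsto_nhds ?_
    simpa using (by fun_prop : Continuous fun s : ℝ =>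
      G (s * (bmoPoint φ l r).1, s ^ 2 * (bmoPoint φ l r).2)).tendsto 1
  have : (𝓝[Ioo 0 1] (1 : ℝ)).NeBot := right_nhdsWithin_Ioo_neBot one_pos
  refine le_of_tendsto_of_tendsto lim_left lim_right ?_
  filter_upwards [self_mem_nhdsWithin] with s hs
  exact (scaled s).intAvg_le_of_sq_lt hlr ((sq_lt_sq₀ (mul_pos hs.1 hε).le hε.le).2
    (mul_lt_of_lt_one_left hε hs.2)) hε
    (fun t => by simpa [abs_mul] using mul_le_mul_of_nonneg_left (hM t) (abs_nonneg s)) hG hGc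

theorem intAvg_le (hφ : memBMOe ε l r φ) (hlr : l < r) (hε : 0 < ε)
    (hG : LocallyConcaveOn (parabStrip ε) G) (hGc : Continuous G)
    (hi : IntegrableOn (fun t => G (φ t, φ t ^ 2)) (Ioo l r)) :
    intAvg (fun t => G (φ t, φ t ^ 2)) l r ≤ G (bmoPoint φ l r) := by
  set ν := (volume.restrict (Ioo l r)).map φ
  have hφm : AEMeasurable φ (volume.restrict (Ioo l r)) := hφ.1.aestronglyMeasurable.aemeasurable
  let h : ℝ → ℝ := fun x => |G (x, x ^ 2)| + |x| + x ^ 2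
  have hh : Continuous h := by fun_prop
  have hhi : Integrable h ν := (integrable_map_measure hh.aestronglyMeasurable hφm).2
    ((hi.abs.add hφ.1.abs).add hφ.2.1)
  obtain ⟨a, b, lim⟩ := exists_clip_tendsto_integral hh hhi
  let ψ : ℕ → ℝ → ℝ := fun k t => max (a k) (min (b k) (φ t))
  have lim_intAvg {g : ℝ → ℝ} (hg : Continuous g) (hgh : ∀ x, |g x| ≤ h x) :
      Tendsto (fun k => intAvg (fun t => g (ψ k t)) l r) atTop
        (𝓝 (intAvg (fun t => g (φ t)) l r)) := by
    have := (lim g hg hgh).div_const (r - l)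
    rw [integral_map hφm hg.aestronglyMeasurable] at this
    simp only [intAvg, intervalIntegral.integral_of_le hlr.le, integral_Ioc_eq_integral_Ioo]
    refine this.congr fun k => ?_
    rw [integral_map hφm (by fun_prop)]
  have dominated (x : ℝ) : |G (x, x ^ 2)| ≤ h x ∧ |x| ≤ h x ∧ |x ^ 2| ≤ h x := by
    rw [abs_sq]
    refine ⟨?_, ?_, ?_⟩ <;>
      linarith [abs_nonneg (G (x, x ^ 2)), abs_nonneg x, sq_nonneg x, (rfl : h x = _)]
  have lim_point : Tendsto (fun k => bmoPoint (ψ k) l r) atTop (𝓝 (bmoPoint φ l r)) :=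
    (lim_intAvg continuous_id fun x => (dominated x).2.1).prodMk_nhds
      (lim_intAvg (continuous_pow 2) fun x => (dominated x).2.2)
  refine le_of_tendsto_of_tendsto' (lim_intAvg (g := fun x => G (x, x ^ 2)) (by fun_prop)
    fun x => (dominated x).1) ((hGc.tendsto _).comp lim_point) fun k => ?_
  have hψ : memBMOe ε l r (ψ k) :=
    hφ.comp_lipschitz (T := fun x => max (a k) (min (b k) x))
      ((LipschitzWith.id.const_min (b k)).const_max (a k))
  have bounded (t : ℝ) : |ψ k t| ≤ max |a k| |b k| :=
    abs_le.2 ⟨(neg_le_neg (le_max_left _ _)).trans ((neg_abs_le _).trans (le_max_left _ _)),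
      max_le_max (le_abs_self _) ((min_le_left _ _).trans (le_abs_self _))⟩
  exact hψ.intAvg_le_of_bounded hlr hε bounded hG hGc

end UpperBound

end memBMOe

end BMO

section ExponentialWeight

open Filter Topology

variable {g g' w : ℝ → ℝ} {x y : ℝ}

lemma absolutelyContinuousOnInterval_of_sub_eq_integral
    (hg : ∀ x y, g y - g x = ∫ t in x..y, g' t) (hi : IntervalIntegrable g' volume x y) :
    AbsolutelyContinuousOnInterval g x y := by
  have primitive : g = fun t => (∫ s in x..t, g' s) + g x := by
    funext t
    rw [← hg x t, sub_add_cancel]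
  rw [primitive]
  exact (hi.absolutelyContinuousOnInterval_intervalIntegral left_mem_uIcc).fun_add
    contDiffOn_const.absolutelyContinuousOnInterval

lemma ae_hasDerivAt_of_sub_eq_integral
    (hg : ∀ x y, g y - g x = ∫ t in x..y, g' t) (hi : IntervalIntegrable g' volume x y) :
    ∀ᵐ t, t ∈ uIcc x y → HasDerivAt g (g' t) t := by
  have primitive : g = fun t => (∫ s in x..t, g' s) + g x := by
    funext t
    rw [← hg x t, sub_add_cancel]
  filter_upwards [hi.ae_hasDerivAt_integral] with t ht hxy
  rw [primitive]
  exact (ht hxy x left_mem_uIcc).add_const (g x)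

lemma integral_deriv_mul_add_mul_deriv (hg : ∀ x y, g y - g x = ∫ t in x..y, g' t)
    (hi : IntervalIntegrable g' volume x y) (hw : ContDiff ℝ 1 w) :
    ∫ t in x..y, (g' t * w t + g t * deriv w t) = g y * w y - g x * w x := by
  rw [← (absolutelyContinuousOnInterval_of_sub_eq_integral hg hi).integral_deriv_mul_eq_sub
    hw.contDiffOn.absolutelyContinuousOnInterval]
  refine intervalIntegral.integral_congr_ae ?_
  filter_upwards [ae_hasDerivAt_of_sub_eq_integral hg hi] with t ht hxy
  rw [(ht (uIoc_subset_uIcc hxy)).deriv]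

lemma deriv_exp_div (ε : ℝ) : deriv (fun t => exp (t / ε)) = fun t => exp (t / ε) / ε := by
  funext t
  simp [div_eq_mul_inv]

lemma intervalIntegrable_of_mul_exp {ε : ℝ}
    (h : IntervalIntegrable (fun t => g t * exp (t / ε)) volume x y) :
    IntervalIntegrable g volume x y := by
  refine (h.mul_continuousOn (g := fun t => exp (-(t / ε))) (by fun_prop)).congr fun t _ => ?_
  simp only [mul_assoc, ← exp_add, add_neg_cancel, exp_zero, mul_one]

lemma integral_Iic_deriv_mul_exp {ε u : ℝ} (hg : ∀ x y, g y - g x = ∫ t in x..y, g' t)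
    (hgi : IntegrableOn (fun t => g t * exp (t / ε)) (Iic u))
    (hgi' : IntegrableOn (fun t => g' t * exp (t / ε)) (Iic u)) :
    ∫ t in Iic u, g' t * exp (t / ε) =
      g u * exp (u / ε) - (∫ t in Iic u, g t * exp (t / ε)) / ε := by
  have hgi_div : Integrable (fun t => g t * (exp (t / ε) / ε)) (volume.restrict (Iic u)) := by
    simpa only [mul_div_assoc] using Integrable.div_const hgi ε
  have parts {x : ℝ} (hx : x ≤ u) :
      ∫ t in x..u, (g' t * exp (t / ε) + g t * (exp (t / ε) / ε)) =
        g u * exp (u / ε) - g x * exp (x / ε) := by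
    have hi : IntervalIntegrable g' volume x u := intervalIntegrable_of_mul_exp (ε := ε)
      ((intervalIntegrable_iff_integrableOn_Ioc_of_le hx).2 (hgi'.mono_set Ioc_subset_Iic_self))
    simpa only [deriv_exp_div] using
      integral_deriv_mul_add_mul_deriv (w := fun t => exp (t / ε)) hg hi (by fun_prop)
  have lim : Tendsto (fun x => g x * exp (x / ε)) atBot (𝓝 (g u * exp (u / ε) -
      ∫ t in Iic u, (g' t * exp (t / ε) + g t * (exp (t / ε) / ε)))) := by
    refine ((intervalIntegral_tendsto_integral_Iic u (hgi'.add hgi_div) tendsto_id).const_sub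
      (g u * exp (u / ε))).congr' ?_
    filter_upwards [Iic_mem_atBot u] with x hx
    rw [id, Pi.add_def, parts hx, sub_sub_cancel]
  have lim_zero := IntegrableAtFilter.eq_zero_of_tendsto (μ := volume)
    ⟨Iic u, Iic_mem_atBot u, hgi⟩ (fun s hs => ?_) lim
  · rw [integral_add hgi' hgi_div] at lim_zero
    simp only [← mul_div_assoc, integral_div] at lim_zero
    linarith
  · obtain ⟨b, hb⟩ := mem_atBot_sets.1 hs
    exact top_unique (volume_Iic (a := b) ▸ measure_mono hb)

lemma integrableOn_Iic_mul_exp {ε ε₀ : ℝ} (hε : 0 < ε) (hεε₀ : ε ≤ ε₀)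
    (hg : Integrable fun t => g t * exp (-|t| / ε₀)) (u : ℝ) :
    IntegrableOn (fun t => g t * exp (t / ε)) (Iic u) := by
  have hε₀ : 0 < ε₀ := hε.trans_le hεε₀
  have weight_le {t : ℝ} (ht : t ≤ u) : t / ε + |t| / ε₀ ≤ |u| / ε + |u| / ε₀ := by
    rcases le_total t 0 with neg | pos
    · have : -t / ε₀ ≤ -t / ε := div_le_div_of_nonneg_left (neg_nonneg.2 neg) hε hεε₀
      have : 0 ≤ |u| / ε + |u| / ε₀ := by positivity
      rw [abs_of_nonpos neg]
      linarith [neg_div ε t]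
    · have : t ≤ |u| := ht.trans (le_abs_self u)
      rw [abs_of_nonneg pos]
      gcongr
  have bounded :
      IntegrableOn (fun t => g t * exp (-|t| / ε₀) * exp (t / ε + |t| / ε₀)) (Iic u) := by
    refine hg.integrableOn.mul_bdd (c := exp (|u| / ε + |u| / ε₀))
      (by fun_prop : Continuous _).aestronglyMeasurable
      ((ae_restrict_iff' measurableSet_Iic).2 (ae_of_all _ fun t ht => ?_))
    rw [norm_of_nonneg (exp_pos _).le]
    exact exp_le_exp.2 (weight_le ht)
  refine bounded.congr_fun (fun t _ => ?_) measurableSet_Iic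
  simp only [mul_assoc, ← exp_add]
  ring_nf

lemma sub_eq_integral_deriv (hg : ContDiff ℝ 1 g) (x y : ℝ) :
    g y - g x = ∫ t in x..y, deriv g t :=
  (intervalIntegral.integral_deriv_eq_sub (fun t _ => hg.differentiable one_ne_zero t)
    ((hg.continuous_deriv le_rfl).intervalIntegrable x y)).symm

lemma hasDerivAt_integral_Iic_mul_exp {ε : ℝ} (hg : Continuous g)
    (hi : ∀ u, IntegrableOn (fun t => g t * exp (t / ε)) (Iic u)) (u : ℝ) :
    HasDerivAt (fun u => ∫ t in Iic u, g t * exp (t / ε)) (g u * exp (u / ε)) u := by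
  have split : (fun s => ∫ t in Iic s, g t * exp (t / ε)) =
      fun s => (∫ t in Iic u, g t * exp (t / ε)) + ∫ t in u..s, g t * exp (t / ε) := by
    funext s
    rw [← intervalIntegral.integral_Iic_sub_Iic (hi u) (hi s), add_sub_cancel]
  have cont : Continuous fun t => g t * exp (t / ε) := by fun_prop
  rw [split]
  exact (cont.integral_hasStrictDerivAt u u).hasDerivAt.const_add _

end ExponentialWeight

lemma integral_Iic_deriv_mul_exp_eq_mRinf {ε : ℝ} (hε : ε ≠ 0) (f : ℝ → ℝ) (u : ℝ) :
    ∫ t in Iic u, deriv f t * exp (t / ε) = ε * exp (u / ε) * mRinf ε f u := by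
  rw [mRinf, neg_div, exp_neg]
  field_simp

lemma mLinf_eq_neg_mRinf_comp_neg (ε : ℝ) (f : ℝ → ℝ) (u : ℝ) :
    mLinf ε f u = -mRinf ε (fun t => f (-t)) (-u) := by
  have reflect := integral_comp_neg_Iic (-u) fun t => deriv f t * exp (-t / ε)
  simp only [neg_neg] at reflect
  simp only [mLinf, mRinf, deriv_comp_neg, neg_mul, integral_neg, neg_neg, reflect,
    integral_Ici_eq_integral_Ioi, mul_neg]

namespace memWcl

variable {ε ε₀ : ℝ} {f f3 : ℝ → ℝ}

lemma contDiff_deriv (hf : memWcl ε₀ f f3) : ContDiff ℝ 1 (deriv f) :=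
  (contDiff_succ_iff_deriv.1 (one_add_one_eq_two (R := WithTop ℕ∞) ▸ hf.1)).2.2

lemma sub_eq_integral_third (hf : memWcl ε₀ f f3) (x y : ℝ) :
    deriv (deriv f) y - deriv (deriv f) x = ∫ t in x..y, f3 t := by
  rcases le_total x y with hxy | hyx
  · exact hf.2.1 x y hxy
  · rw [intervalIntegral.integral_symm, ← hf.2.1 y x hyx, neg_sub]

lemma comp_neg (hf : memWcl ε₀ f f3) : memWcl ε₀ (fun t => f (-t)) (fun t => -f3 (-t)) := by
  have deriv_neg : deriv (fun t => f (-t)) = fun t => -deriv f (-t) := funext (deriv_comp_neg f)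
  have deriv_deriv_neg : deriv (deriv fun t => f (-t)) = fun t => deriv (deriv f) (-t) := by
    rw [deriv_neg]
    funext t
    rw [deriv.fun_neg, deriv_comp_neg, neg_neg]
  obtain ⟨hc, -, i0, i1, i2, i3⟩ := id hf
  refine ⟨hc.comp contDiff_neg, fun x y _ => ?_, ?_, ?_, ?_, ?_⟩
  · rw [deriv_deriv_neg, intervalIntegral.integral_neg, intervalIntegral.integral_comp_neg f3,
      ← hf.sub_eq_integral_third, neg_sub]
  · simpa using i0.comp_neg
  · simpa [deriv_neg] using i1.comp_neg.neg
  · simpa [deriv_deriv_neg] using i2.comp_neg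
  · simpa using i3.comp_neg.neg

lemma integral_Iic_mul_exp (hf : memWcl ε₀ f f3) (hε : 0 < ε) (hεε₀ : ε ≤ ε₀) (u : ℝ) :
    ∫ t in Iic u, f t * exp (t / ε) = ε * exp (u / ε) * (f u - ε * mRinf ε f u) := by
  have parts := integral_Iic_deriv_mul_exp (u := u) (sub_eq_integral_deriv (hf.1.of_le one_le_two))
    (integrableOn_Iic_mul_exp hε hεε₀ hf.2.2.1 u) (integrableOn_Iic_mul_exp hε hεε₀ hf.2.2.2.1 u)
  rw [integral_Iic_deriv_mul_exp_eq_mRinf hε.ne'] at parts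
  field_simp at parts
  linarith

lemma integral_Iic_third_mul_exp (hf : memWcl ε₀ f f3) (hε : 0 < ε) (hεε₀ : ε ≤ ε₀) (u : ℝ) :
    ∫ t in Iic u, f3 t * exp (t / ε) =
      exp (u / ε) * (deriv (deriv f) u - (deriv f u - mRinf ε f u) / ε) := by
  have j1 := integrableOn_Iic_mul_exp hε hεε₀ hf.2.2.2.1 u
  have j2 := integrableOn_Iic_mul_exp hε hεε₀ hf.2.2.2.2.1 u
  have j3 := integrableOn_Iic_mul_exp hε hεε₀ hf.2.2.2.2.2 u
  rw [integral_Iic_deriv_mul_exp hf.sub_eq_integral_third j2 j3,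
    integral_Iic_deriv_mul_exp (sub_eq_integral_deriv hf.contDiff_deriv) j1 j2,
    integral_Iic_deriv_mul_exp_eq_mRinf hε.ne']
  field_simp

lemma hasDerivAt_mRinf (hf : memWcl ε₀ f f3) (hε : 0 < ε) (hεε₀ : ε ≤ ε₀) (u : ℝ) :
    HasDerivAt (mRinf ε f) ((deriv f u - mRinf ε f u) / ε) u := by
  have deriv_exp : HasDerivAt (fun u => ε⁻¹ * exp (-u / ε)) (-(ε⁻¹ * exp (-u / ε)) / ε) u := by
    refine (((hasDerivAt_neg u).div_const ε).exp.const_mul ε⁻¹).congr_deriv ?_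
    ring
  refine (deriv_exp.mul (hasDerivAt_integral_Iic_mul_exp hf.contDiff_deriv.continuous
    (integrableOn_Iic_mul_exp hε hεε₀ hf.2.2.2.1) u)).congr_deriv ?_
  rw [integral_Iic_deriv_mul_exp_eq_mRinf hε.ne', neg_div ε u, exp_neg]
  field_simp
  ring

lemma hasDerivAt_mLinf (hf : memWcl ε₀ f f3) (hε : 0 < ε) (hεε₀ : ε ≤ ε₀) (u : ℝ) :
    HasDerivAt (mLinf ε f) ((mLinf ε f u - deriv f u) / ε) u := by
  rw [funext (mLinf_eq_neg_mRinf_comp_neg ε f)]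
  have reflected := hf.comp_neg.hasDerivAt_mRinf hε hεε₀ (-u)
  refine (reflected.comp u (hasDerivAt_neg u)).neg.congr_deriv ?_
  rw [deriv_comp_neg, neg_neg]
  ring

lemma integral_Ici_third_mul_exp (hf : memWcl ε₀ f f3) (hε : 0 < ε) (hεε₀ : ε ≤ ε₀) (u : ℝ) :
    ∫ t in Ici u, f3 t * exp (-t / ε) =
      exp (-u / ε) * ((mLinf ε f u - deriv f u) / ε - deriv (deriv f) u) := by
  have deriv_neg : deriv (fun t => f (-t)) = fun t => -deriv f (-t) := funext (deriv_comp_neg f)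
  have reflect := integral_comp_neg_Iic (-u) fun t => f3 t * exp (-t / ε)
  have reflected := hf.comp_neg.integral_Iic_third_mul_exp hε hεε₀ (-u)
  simp only [neg_neg] at reflect
  simp only [neg_mul, integral_neg, reflect, deriv_neg, deriv.fun_neg, deriv_comp_neg, neg_neg]
    at reflected
  rw [integral_Ici_eq_integral_Ioi, mLinf_eq_neg_mRinf_comp_neg, ← neg_inj, reflected]
  ring

end memWcl

section TangentPlanes

variable {e ε u : ℝ} {f m : ℝ → ℝ} {y : ℝ × ℝ}

/-- The affine function of `y` vanishing on the line that touches the parabola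
`y.2 = y.1 ^ 2 + e ^ 2` at abscissa `u - e`; that line meets `y.2 = y.1 ^ 2` at abscissa `u`.
Positive `e` gives the right tangents, negative `e` the left ones. -/
def tangentForm (e u : ℝ) (y : ℝ × ℝ) : ℝ := y.2 - 2 * (u - e) * y.1 + u ^ 2 - 2 * e * u

/-- The affine function of `y` that equals `f u + m u * (y.1 - u)` on the zero line of
`tangentForm e u`. Its transversal slope is the one that makes the plane the envelope of its
neighbours when `m' = (f' - m) / e`. -/
noncomputable def tangentPlane (e : ℝ) (f m : ℝ → ℝ) (u : ℝ) (y : ℝ × ℝ) : ℝ :=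
  f u + m u * (y.1 - u) + (deriv f u - m u) / e / 2 * tangentForm e u y

lemma tangentForm_eq_mul (hy : y ∈ parabStrip ε) (u : ℝ) :
    tangentForm ε u y = (u - uRpt ε y) * (u - (y.1 + ε + tangentRadius ε y)) := by
  rw [uRpt_eq, tangentForm]
  linear_combination sq_tangentRadius hy

lemma tangentForm_neg_eq_mul (hy : y ∈ parabStrip ε) (u : ℝ) :
    tangentForm (-ε) u y = (u - (y.1 - ε - tangentRadius ε y)) * (u - uLpt ε y) := by
  rw [uLpt_eq, tangentForm]
  linear_combination sq_tangentRadius hy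

lemma hasDerivAt_tangentPlane (he : e ≠ 0) (hf : ContDiff ℝ 2 f)
    (hm : HasDerivAt m ((deriv f u - m u) / e) u) (y : ℝ × ℝ) :
    HasDerivAt (fun u => tangentPlane e f m u y)
      ((deriv (deriv f) u - (deriv f u - m u) / e) / e / 2 * tangentForm e u y) u := by
  have hf₁ : HasDerivAt f (deriv f u) u := (hf.differentiable two_ne_zero u).hasDerivAt
  have hf₂ : HasDerivAt (deriv f) (deriv (deriv f) u) u :=
    (hf.differentiable_deriv_two u).hasDerivAt
  have form : HasDerivAt (fun u => tangentForm e u y) (-2 * y.1 + 2 * u - 2 * e) u := by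
    have := (((hasDerivAt_id' u).sub_const e).const_mul 2).mul_const y.1
    refine (((this.const_sub y.2).add (hasDerivAt_pow 2 u)).sub
      ((hasDerivAt_id' u).const_mul (2 * e))).congr_deriv ?_
    norm_num
  refine ((hf₁.add (hm.mul ((hasDerivAt_id' u).const_sub y.1))).add
    ((((hf₂.sub hm).div_const e).div_const 2).mul form)).congr_deriv ?_
  simp only [Pi.sub_apply]
  field_simp
  rw [tangentForm]
  ring

lemma continuous_tangentPlane (hf : ContDiff ℝ 2 f) (hm : Continuous m) (e : ℝ) :
    Continuous fun p : ℝ × ℝ × ℝ => tangentPlane e f m p.1 p.2 := by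
  have := hf.continuous
  have := hf.continuous_deriv one_le_two
  unfold tangentPlane tangentForm
  fun_prop

lemma tangentPlane_smul_add_smul (e : ℝ) (f m : ℝ → ℝ) (u : ℝ) (x y : ℝ × ℝ) {a b : ℝ}
    (hab : a + b = 1) :
    tangentPlane e f m u (a • x + b • y) =
      a * tangentPlane e f m u x + b * tangentPlane e f m u y := by
  obtain rfl : b = 1 - a := by linarith
  simp only [tangentPlane, tangentForm, Prod.fst_add, Prod.snd_add, Prod.smul_fst, Prod.smul_snd,
    smul_eq_mul]
  ring

lemma tangentPlane_self_sq (e : ℝ) (f m : ℝ → ℝ) (s : ℝ) :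
    tangentPlane e f m s (s, s ^ 2) = f s := by
  simp only [tangentPlane, tangentForm]
  ring

end TangentPlanes

section Angle

variable {ε v : ℝ} {f : ℝ → ℝ}

/-- `v` is the vertex of an angle for `f`: right tangents foliate the strip to the left of `v`, left
tangents to its right, and `balance` makes the two families of tangent planes agree at `v`. The
inequalities on `f''` say that the tangent planes lie above the boundary data. -/
structure IsAngle (ε : ℝ) (f : ℝ → ℝ) (v : ℝ) : Prop where
  pos : 0 < ε
  contDiff : ContDiff ℝ 2 f
  hasDerivAt_mRinf : ∀ u, HasDerivAt (mRinf ε f) ((deriv f u - mRinf ε f u) / ε) u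
  hasDerivAt_mLinf : ∀ u, HasDerivAt (mLinf ε f) ((mLinf ε f u - deriv f u) / ε) u
  deriv_deriv_le_of_le : ∀ u ≤ v, deriv (deriv f) u ≤ (deriv f u - mRinf ε f u) / ε
  deriv_deriv_le_of_ge : ∀ u, v ≤ u → deriv (deriv f) u ≤ (mLinf ε f u - deriv f u) / ε
  balance : mRinf ε f v + mLinf ε f v = 2 * deriv f v

lemma memWcl.isAngle {ε₀ : ℝ} {f3 : ℝ → ℝ} (hf : memWcl ε₀ f f3) (hε : 0 < ε) (hεε₀ : ε ≤ ε₀)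
    (hR : ∀ u ≤ v, ∫ t in Iic u, f3 t * exp (t / ε) ≤ 0)
    (hL : ∀ u, v ≤ u → 0 ≤ ∫ t in Ici u, f3 t * exp (-t / ε))
    (hbal : exp (-v / ε) * (∫ t in Iic v, f3 t * exp (t / ε)) +
      exp (v / ε) * (∫ t in Ici v, f3 t * exp (-t / ε)) = 0) : IsAngle ε f v where
  pos := hε
  contDiff := hf.1
  hasDerivAt_mRinf := hf.hasDerivAt_mRinf hε hεε₀
  hasDerivAt_mLinf := hf.hasDerivAt_mLinf hε hεε₀
  deriv_deriv_le_of_le u hu := by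
    have := hR u hu
    rw [hf.integral_Iic_third_mul_exp hε hεε₀] at this
    exact sub_nonpos.1 (nonpos_of_mul_nonpos_right this (exp_pos _))
  deriv_deriv_le_of_ge u hu := by
    have := hL u hu
    rw [hf.integral_Ici_third_mul_exp hε hεε₀] at this
    exact sub_nonneg.1 (nonneg_of_mul_nonneg_right this (exp_pos _))
  balance := by
    rw [hf.integral_Iic_third_mul_exp hε hεε₀, hf.integral_Ici_third_mul_exp hε hεε₀, ← mul_assoc,
      ← mul_assoc, ← exp_add, ← exp_add, neg_div, neg_add_cancel, add_neg_cancel, exp_zero] at hbal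
    field_simp at hbal
    linarith

/-- The supporting plane of the Bellman candidate with parameter `u`: the right tangent plane
before the vertex `v` and the left one after it. -/
noncomputable def supportPlane (ε : ℝ) (f : ℝ → ℝ) (v u : ℝ) (y : ℝ × ℝ) : ℝ :=
  if u ≤ v then tangentPlane ε f (mRinf ε f) u y else tangentPlane (-ε) f (mLinf ε f) u y

/-- The parameter of the supporting plane at `x`: that of the right tangent through `x` if it does
not exceed `v`, that of the left one if it is at least `v`, and `v` for `x` inside the angle. -/
noncomputable def supportParam (ε v : ℝ) (x : ℝ × ℝ) : ℝ := max (uLpt ε x) (min (uRpt ε x) v)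

/-- The explicit locally concave function that turns out to be the Bellman function. -/
noncomputable def bellmanCandidate (ε : ℝ) (f : ℝ → ℝ) (v : ℝ) (x : ℝ × ℝ) : ℝ :=
  supportPlane ε f v (supportParam ε v x) x

lemma supportPlane_of_le {u : ℝ} (hu : u ≤ v) :
    supportPlane ε f v u = tangentPlane ε f (mRinf ε f) u := by
  funext y
  exact if_pos hu

lemma supportPlane_smul_add_smul (ε : ℝ) (f : ℝ → ℝ) (v u : ℝ) (x y : ℝ × ℝ) {a b : ℝ}
    (hab : a + b = 1) :
    supportPlane ε f v u (a • x + b • y) =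
      a * supportPlane ε f v u x + b * supportPlane ε f v u y := by
  unfold supportPlane
  split_ifs <;> exact tangentPlane_smul_add_smul _ _ _ _ _ _ hab

lemma supportPlane_self_sq (ε : ℝ) (f : ℝ → ℝ) (v s : ℝ) :
    supportPlane ε f v s (s, s ^ 2) = f s := by
  unfold supportPlane
  split_ifs <;> exact tangentPlane_self_sq _ _ _ _

lemma continuous_supportParam (ε v : ℝ) : Continuous (supportParam ε v) := by
  unfold supportParam uLpt uRpt
  fun_prop

section

variable {x : ℝ × ℝ}

lemma uLpt_le_uRpt (hε : 0 ≤ ε) (hx : x.1 ^ 2 ≤ x.2) : uLpt ε x ≤ uRpt ε x := by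
  rw [uLpt_eq, uRpt_eq]
  linarith [tangentRadius_le hε hx]

lemma supportParam_of_uRpt_le (hε : 0 ≤ ε) (hx : x.1 ^ 2 ≤ x.2) (hv : uRpt ε x ≤ v) :
    supportParam ε v x = uRpt ε x := by
  rw [supportParam, min_eq_left hv, max_eq_right (uLpt_le_uRpt hε hx)]

lemma supportParam_of_le_uLpt (hε : 0 ≤ ε) (hx : x.1 ^ 2 ≤ x.2) (hv : v ≤ uLpt ε x) :
    supportParam ε v x = uLpt ε x := by
  rw [supportParam, min_eq_right (hv.trans (uLpt_le_uRpt hε hx)), max_eq_left hv]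

lemma supportParam_of_mem (hL : uLpt ε x ≤ v) (hR : v ≤ uRpt ε x) : supportParam ε v x = v := by
  rw [supportParam, min_eq_right hR, max_eq_right hL]

lemma supportParam_mem_Icc (hε : 0 ≤ ε) (hx : x.1 ^ 2 ≤ x.2) (v : ℝ) :
    supportParam ε v x ∈ Icc (uLpt ε x) (uRpt ε x) :=
  ⟨le_max_left _ _, max_le (uLpt_le_uRpt hε hx) (min_le_left _ _)⟩

lemma supportParam_self_sq (hε : 0 ≤ ε) (v s : ℝ) : supportParam ε v (s, s ^ 2) = s := by
  have := supportParam_mem_Icc (x := (s, s ^ 2)) hε le_rfl v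
  simpa [uLpt, uRpt, sqrt_sq hε] using this

lemma bellmanCandidate_self_sq (hε : 0 ≤ ε) (f : ℝ → ℝ) (v s : ℝ) :
    bellmanCandidate ε f v (s, s ^ 2) = f s := by
  rw [bellmanCandidate, supportParam_self_sq hε, supportPlane_self_sq]

end

end Angle

namespace IsAngle

variable {ε u v w : ℝ} {f : ℝ → ℝ} {x y : ℝ × ℝ}

lemma continuous_mRinf (h : IsAngle ε f v) : Continuous (mRinf ε f) :=
  continuous_iff_continuousAt.2 fun u => (h.hasDerivAt_mRinf u).continuousAt

lemma continuous_mLinf (h : IsAngle ε f v) : Continuous (mLinf ε f) :=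
  continuous_iff_continuousAt.2 fun u => (h.hasDerivAt_mLinf u).continuousAt

lemma tangentPlane_vertex (h : IsAngle ε f v) (y : ℝ × ℝ) :
    tangentPlane ε f (mRinf ε f) v y = tangentPlane (-ε) f (mLinf ε f) v y := by
  have hε := h.pos.ne'
  simp only [tangentPlane, tangentForm, eq_sub_of_add_eq' h.balance]
  field_simp
  ring

lemma supportPlane_of_ge (h : IsAngle ε f v) (hu : v ≤ u) :
    supportPlane ε f v u = tangentPlane (-ε) f (mLinf ε f) u := by
  rcases hu.eq_or_lt with rfl | hlt
  · exact (supportPlane_of_le le_rfl).trans (funext h.tangentPlane_vertex)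
  · funext y
    exact if_neg hlt.not_ge

lemma continuous_supportPlane (h : IsAngle ε f v) :
    Continuous fun p : ℝ × ℝ × ℝ => supportPlane ε f v p.1 p.2 := by
  refine Continuous.if_le (continuous_tangentPlane h.contDiff h.continuous_mRinf ε)
    (continuous_tangentPlane h.contDiff h.continuous_mLinf (-ε)) continuous_fst continuous_const
    fun p hp => ?_
  rw [hp, h.tangentPlane_vertex]

lemma hasDerivAt_rightPlane (h : IsAngle ε f v) (u : ℝ) (y : ℝ × ℝ) :
    HasDerivAt (fun u => tangentPlane ε f (mRinf ε f) u y)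
      ((deriv (deriv f) u - (deriv f u - mRinf ε f u) / ε) / ε / 2 * tangentForm ε u y) u :=
  hasDerivAt_tangentPlane h.pos.ne' h.contDiff (h.hasDerivAt_mRinf u) y

lemma hasDerivAt_leftPlane (h : IsAngle ε f v) (u : ℝ) (y : ℝ × ℝ) :
    HasDerivAt (fun u => tangentPlane (-ε) f (mLinf ε f) u y)
      (((mLinf ε f u - deriv f u) / ε - deriv (deriv f) u) / ε / 2 * tangentForm (-ε) u y) u := by
  refine (hasDerivAt_tangentPlane (neg_ne_zero.2 h.pos.ne') h.contDiff
    ((h.hasDerivAt_mLinf u).congr_deriv (by rw [div_neg, ← neg_div, neg_sub])) y).congr_deriv ?_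
  ring

lemma rightSlope_nonpos (h : IsAngle ε f v) (hu : u ≤ v) :
    (deriv (deriv f) u - (deriv f u - mRinf ε f u) / ε) / ε / 2 ≤ 0 :=
  div_nonpos_of_nonpos_of_nonneg (div_nonpos_of_nonpos_of_nonneg
    (sub_nonpos.2 (h.deriv_deriv_le_of_le u hu)) h.pos.le) zero_le_two

lemma leftSlope_nonneg (h : IsAngle ε f v) (hu : v ≤ u) :
    0 ≤ ((mLinf ε f u - deriv f u) / ε - deriv (deriv f) u) / ε / 2 :=
  div_nonneg (div_nonneg (sub_nonneg.2 (h.deriv_deriv_le_of_ge u hu)) h.pos.le) zero_le_two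

lemma antitoneOn_supportPlane_Iic (h : IsAngle ε f v) (hy : y ∈ parabStrip ε) :
    AntitoneOn (fun u => supportPlane ε f v u y) (Iic (min v (uRpt ε y))) := by
  have eqOn : EqOn (fun u => tangentPlane ε f (mRinf ε f) u y)
      (fun u => supportPlane ε f v u y) (Iic (min v (uRpt ε y))) := fun u hu =>
    (congrFun (supportPlane_of_le (le_min_iff.1 hu).1) y).symm
  refine (antitoneOn_of_hasDerivWithinAt_nonpos (convex_Iic _)
    (fun u _ => (h.hasDerivAt_rightPlane u y).continuousAt.continuousWithinAt)
    (fun u _ => (h.hasDerivAt_rightPlane u y).hasDerivWithinAt) fun u hu => ?_).congr eqOn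
  obtain ⟨huv, hu⟩ := le_min_iff.1 (mem_Iic.1 (interior_subset hu))
  rw [tangentForm_eq_mul hy]
  have hu' : u ≤ y.1 + ε + tangentRadius ε y := by
    linarith [uRpt_eq ε y, tangentRadius_nonneg ε y]
  exact mul_nonpos_of_nonpos_of_nonneg (h.rightSlope_nonpos huv)
    (mul_nonneg_of_nonpos_of_nonpos (sub_nonpos.2 hu) (sub_nonpos.2 hu'))

lemma monotoneOn_supportPlane_Icc (h : IsAngle ε f v) (hy : y ∈ parabStrip ε) :
    MonotoneOn (fun u => supportPlane ε f v u y)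
      (Icc (uRpt ε y) (min v (y.1 + ε + tangentRadius ε y))) := by
  have eqOn : EqOn (fun u => tangentPlane ε f (mRinf ε f) u y)
      (fun u => supportPlane ε f v u y) (Icc (uRpt ε y) (min v (y.1 + ε + tangentRadius ε y))) :=
    fun u hu => (congrFun (supportPlane_of_le (le_min_iff.1 hu.2).1) y).symm
  refine (monotoneOn_of_hasDerivWithinAt_nonneg (convex_Icc _ _)
    (fun u _ => (h.hasDerivAt_rightPlane u y).continuousAt.continuousWithinAt)
    (fun u _ => (h.hasDerivAt_rightPlane u y).hasDerivWithinAt) fun u hu => ?_).congr eqOn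
  obtain ⟨hRu, hu⟩ := interior_subset hu
  obtain ⟨huv, hu⟩ := le_min_iff.1 hu
  rw [tangentForm_eq_mul hy]
  exact mul_nonneg_of_nonpos_of_nonpos (h.rightSlope_nonpos huv)
    (mul_nonpos_of_nonneg_of_nonpos (sub_nonneg.2 hRu) (sub_nonpos.2 hu))

lemma monotoneOn_supportPlane_Ici (h : IsAngle ε f v) (hy : y ∈ parabStrip ε) :
    MonotoneOn (fun u => supportPlane ε f v u y) (Ici (max v (uLpt ε y))) := by
  have eqOn : EqOn (fun u => tangentPlane (-ε) f (mLinf ε f) u y)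
      (fun u => supportPlane ε f v u y) (Ici (max v (uLpt ε y))) := fun u hu =>
    (congrFun (h.supportPlane_of_ge (max_le_iff.1 hu).1) y).symm
  refine (monotoneOn_of_hasDerivWithinAt_nonneg (convex_Ici _)
    (fun u _ => (h.hasDerivAt_leftPlane u y).continuousAt.continuousWithinAt)
    (fun u _ => (h.hasDerivAt_leftPlane u y).hasDerivWithinAt) fun u hu => ?_).congr eqOn
  obtain ⟨huv, hu⟩ := max_le_iff.1 (interior_subset hu)
  rw [tangentForm_neg_eq_mul hy]
  have hu' : y.1 - ε - tangentRadius ε y ≤ u := by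
    linarith [uLpt_eq ε y, tangentRadius_nonneg ε y]
  exact mul_nonneg (h.leftSlope_nonneg huv) (mul_nonneg (sub_nonneg.2 hu') (sub_nonneg.2 hu))

lemma antitoneOn_supportPlane_Icc (h : IsAngle ε f v) (hy : y ∈ parabStrip ε) :
    AntitoneOn (fun u => supportPlane ε f v u y)
      (Icc (max v (y.1 - ε - tangentRadius ε y)) (uLpt ε y)) := by
  have eqOn : EqOn (fun u => tangentPlane (-ε) f (mLinf ε f) u y)
      (fun u => supportPlane ε f v u y) (Icc (max v (y.1 - ε - tangentRadius ε y)) (uLpt ε y)) :=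
    fun u hu => (congrFun (h.supportPlane_of_ge (max_le_iff.1 hu.1).1) y).symm
  refine (antitoneOn_of_hasDerivWithinAt_nonpos (convex_Icc _ _)
    (fun u _ => (h.hasDerivAt_leftPlane u y).continuousAt.continuousWithinAt)
    (fun u _ => (h.hasDerivAt_leftPlane u y).hasDerivWithinAt) fun u hu => ?_).congr eqOn
  obtain ⟨hu, huL⟩ := interior_subset hu
  obtain ⟨huv, hu⟩ := max_le_iff.1 hu
  rw [tangentForm_neg_eq_mul hy]
  exact mul_nonpos_of_nonneg_of_nonpos (h.leftSlope_nonneg huv)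
    (mul_nonpos_of_nonneg_of_nonpos (sub_nonneg.2 hu) (sub_nonpos.2 huL))

lemma bellmanCandidate_le_of_uRpt_le (h : IsAngle ε f v) (hy : y ∈ parabStrip ε)
    (hv : uRpt ε y ≤ v) (hw : w ≤ y.1 + ε + tangentRadius ε y) :
    bellmanCandidate ε f v y ≤ supportPlane ε f v w y := by
  rw [bellmanCandidate, supportParam_of_uRpt_le h.pos.le hy.1 hv]
  rcases le_total w (uRpt ε y) with hwR | hRw
  · exact h.antitoneOn_supportPlane_Iic hy (le_min (hwR.trans hv) hwR) (le_min hv le_rfl) hwR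
  have incr := h.monotoneOn_supportPlane_Icc hy
  rcases le_total w v with hwv | hvw
  · exact incr ⟨le_rfl, le_min hv (hRw.trans hw)⟩ ⟨hRw, le_min hwv hw⟩ hRw
  · have hLv : uLpt ε y ≤ v := (uLpt_le_uRpt h.pos.le hy.1).trans hv
    exact (incr ⟨le_rfl, le_min hv (hRw.trans hw)⟩ ⟨hv, le_min le_rfl (hvw.trans hw)⟩ hv).trans
      (h.monotoneOn_supportPlane_Ici hy (max_le le_rfl hLv) (max_le hvw (hLv.trans hvw)) hvw)

lemma bellmanCandidate_le_of_le_uLpt (h : IsAngle ε f v) (hy : y ∈ parabStrip ε)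
    (hv : v ≤ uLpt ε y) (hw : y.1 - ε - tangentRadius ε y ≤ w) :
    bellmanCandidate ε f v y ≤ supportPlane ε f v w y := by
  rw [bellmanCandidate, supportParam_of_le_uLpt h.pos.le hy.1 hv]
  rcases le_total (uLpt ε y) w with hLw | hwL
  · exact h.monotoneOn_supportPlane_Ici hy (max_le hv le_rfl) (max_le (hv.trans hLw) hLw) hLw
  have decr := h.antitoneOn_supportPlane_Icc hy
  rcases le_total v w with hvw | hwv
  · exact decr ⟨max_le hvw hw, hwL⟩ ⟨max_le hv (hw.trans hwL), le_rfl⟩ hwL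
  · have hvR : v ≤ uRpt ε y := hv.trans (uLpt_le_uRpt h.pos.le hy.1)
    exact (decr ⟨max_le le_rfl (hw.trans hwv), hv⟩ ⟨max_le hv (hw.trans hwL), le_rfl⟩ hv).trans
      (h.antitoneOn_supportPlane_Iic hy (le_min hwv (hwv.trans hvR)) (le_min le_rfl hvR) hwv)

lemma bellmanCandidate_le_supportPlane (h : IsAngle ε f v) (hy : y ∈ parabStrip ε)
    (hw : w ∈ Icc (y.1 - ε - tangentRadius ε y) (y.1 + ε + tangentRadius ε y)) :
    bellmanCandidate ε f v y ≤ supportPlane ε f v w y := by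
  rcases le_total (uRpt ε y) v with hRv | hvR
  · exact h.bellmanCandidate_le_of_uRpt_le hy hRv hw.2
  rcases le_total v (uLpt ε y) with hvL | hLv
  · exact h.bellmanCandidate_le_of_le_uLpt hy hvL hw.1
  rw [bellmanCandidate, supportParam_of_mem hLv hvR]
  rcases le_total w v with hwv | hvw
  · exact h.antitoneOn_supportPlane_Iic hy (le_min hwv (hwv.trans hvR)) (le_min le_rfl hvR) hwv
  · exact h.monotoneOn_supportPlane_Ici hy (max_le le_rfl hLv) (max_le hvw (hLv.trans hvw)) hvw

lemma bellmanCandidate_le_of_segment_subset (h : IsAngle ε f v) (hx : x ∈ parabStrip ε)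
    (hy : y ∈ parabStrip ε) (hxy : segment ℝ x y ⊆ parabStrip ε) :
    bellmanCandidate ε f v y ≤ supportPlane ε f v (supportParam ε v x) y := by
  obtain ⟨hL, hR⟩ := supportParam_mem_Icc h.pos.le hx.1 v
  obtain ⟨hle, hge⟩ := abs_le.1 ((segment_subset_parabStrip_iff hx hy).1 hxy)
  rw [uLpt_eq] at hL
  rw [uRpt_eq] at hR
  exact h.bellmanCandidate_le_supportPlane hy ⟨by linarith, by linarith⟩

lemma locallyConcaveOn_bellmanCandidate (h : IsAngle ε f v) :
    LocallyConcaveOn (parabStrip ε) (bellmanCandidate ε f v) := by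
  refine fun S hS hconv => ⟨hconv, fun x hx y hy a b ha hb hab => ?_⟩
  set z := a • x + b • y
  have hz : z ∈ S := hconv hx hy ha hb hab
  have below {w : ℝ × ℝ} (hw : w ∈ S) :
      bellmanCandidate ε f v w ≤ supportPlane ε f v (supportParam ε v z) w :=
    h.bellmanCandidate_le_of_segment_subset (hS hz) (hS hw) ((hconv.segment_subset hz hw).trans hS)
  calc a • bellmanCandidate ε f v x + b • bellmanCandidate ε f v y
      ≤ a * supportPlane ε f v (supportParam ε v z) x +
        b * supportPlane ε f v (supportParam ε v z) y :=
        add_le_add (mul_le_mul_of_nonneg_left (below hx) ha)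
          (mul_le_mul_of_nonneg_left (below hy) hb)
    _ = bellmanCandidate ε f v z := (supportPlane_smul_add_smul _ _ _ _ _ _ hab).symm

lemma continuous_bellmanCandidate (h : IsAngle ε f v) : Continuous (bellmanCandidate ε f v) :=
  h.continuous_supportPlane.comp ((continuous_supportParam ε v).prodMk continuous_id)

lemma bellmanCandidate_of_uRpt_le (h : IsAngle ε f v) (hx : x ∈ parabStrip ε)
    (hv : uRpt ε x ≤ v) :
    bellmanCandidate ε f v x = mRinf ε f (uRpt ε x) * (x.1 - uRpt ε x) + f (uRpt ε x) := by
  rw [bellmanCandidate, supportParam_of_uRpt_le h.pos.le hx.1 hv, supportPlane_of_le hv,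
    tangentPlane, tangentForm_eq_mul hx]
  ring

lemma bellmanCandidate_of_le_uLpt (h : IsAngle ε f v) (hx : x ∈ parabStrip ε)
    (hv : v ≤ uLpt ε x) :
    bellmanCandidate ε f v x = mLinf ε f (uLpt ε x) * (x.1 - uLpt ε x) + f (uLpt ε x) := by
  rw [bellmanCandidate, supportParam_of_le_uLpt h.pos.le hx.1 hv, h.supportPlane_of_ge hv,
    tangentPlane, tangentForm_neg_eq_mul hx]
  ring

lemma bellmanCandidate_of_mem (h : IsAngle ε f v) (hL : uLpt ε x ≤ v) (hR : v ≤ uRpt ε x) :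
    bellmanCandidate ε f v x =
      ((mRinf ε f v + mLinf ε f v) / 2 - v * (mLinf ε f v - mRinf ε f v) / (2 * ε)) * x.1 +
        ((mLinf ε f v - mRinf ε f v) / (4 * ε)) * x.2 +
        (v ^ 2 * (mLinf ε f v - mRinf ε f v) / (4 * ε) -
          v * (mRinf ε f v + mLinf ε f v) / 2 + f v) := by
  have hε := h.pos.ne'
  rw [bellmanCandidate, supportParam_of_mem hL hR, supportPlane_of_le le_rfl, tangentPlane,
    tangentForm, show deriv f v = (mRinf ε f v + mLinf ε f v) / 2 by linarith [h.balance]]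
  field_simp
  ring

end IsAngle

section TruncatedLogarithm

/-- The logarithm `log (t / q)`, cut off at its zero `t = q`. With `x / 0 = 0` and `log 0 = 0` this
vanishes identically for `q = 0` and `0 ≤ t`. -/
noncomputable def truncLog (q t : ℝ) : ℝ := log (min t q / q)

/-- The moment `∫ t in 0..s, truncLog q t ^ k`. -/
noncomputable def truncLogMoment (k : ℕ) (q s : ℝ) : ℝ := ∫ t in (0 : ℝ)..s, truncLog q t ^ k

variable {q s t : ℝ} {h : ℝ → ℝ}

lemma truncLog_of_le (hqt : q ≤ t) : truncLog q t = 0 := by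
  rcases eq_or_ne q 0 with rfl | hq
  · simp [truncLog]
  · rw [truncLog, min_eq_right hqt, div_self hq, log_one]

lemma truncLog_nonpos (hq : 0 ≤ q) (ht : 0 ≤ t) : truncLog q t ≤ 0 :=
  log_nonpos (div_nonneg (le_min ht hq) hq) (div_le_one_of_le₀ (min_le_right _ _) hq)

lemma mul_exp_truncLog (hq : 0 < q) (ht : 0 < t) : q * exp (truncLog q t) = min t q := by
  rw [truncLog, exp_log (div_pos (lt_min ht hq) hq), mul_div_cancel₀ _ hq.ne']

lemma image_mul_exp_Iic (hq : 0 < q) (a : ℝ) :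
    (fun s => q * exp s) '' Iic a = Ioc 0 (q * exp a) := by
  ext t
  refine ⟨?_, fun ⟨ht, hta⟩ => ⟨log (t / q), ?_, ?_⟩⟩
  · rintro ⟨s, hs, rfl⟩
    exact ⟨by positivity, mul_le_mul_of_nonneg_left (exp_le_exp.2 hs) hq.le⟩
  · rw [mem_Iic, log_le_iff_le_exp (div_pos ht hq), div_le_iff₀' hq]
    exact hta
  · simp only [exp_log (div_pos ht hq), mul_div_cancel₀ t hq.ne']

lemma injective_mul_exp (hq : 0 < q) : Function.Injective fun s => q * exp s :=
  (mul_right_injective₀ hq.ne').comp exp_injective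

lemma abs_mul_exp_smul_comp_log (hq : 0 < q) (h : ℝ → ℝ) (s : ℝ) :
    |q * exp s| • h (log (q * exp s / q)) = q * (h s * exp s) := by
  rw [abs_of_pos (by positivity), mul_div_cancel_left₀ _ hq.ne', log_exp, smul_eq_mul]
  ring

lemma integrableOn_Ioc_comp_log_div_iff (hq : 0 < q) (a : ℝ) :
    IntegrableOn (fun t => h (log (t / q))) (Ioc 0 (q * exp a)) ↔
      IntegrableOn (fun s => h s * exp s) (Iic a) := by
  rw [← image_mul_exp_Iic hq, integrableOn_image_iff_integrableOn_abs_deriv_smul measurableSet_Iic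
    (fun s _ => ((hasDerivAt_exp s).const_mul q).hasDerivWithinAt) (injective_mul_exp hq).injOn]
  simp only [abs_mul_exp_smul_comp_log hq]
  exact integrable_const_mul_iff (isUnit_iff_ne_zero.2 hq.ne') _

lemma integral_Ioc_comp_log_div (hq : 0 < q) (a : ℝ) :
    ∫ t in Ioc 0 (q * exp a), h (log (t / q)) = q * ∫ s in Iic a, h s * exp s := by
  rw [← image_mul_exp_Iic hq, integral_image_eq_integral_abs_deriv_smul measurableSet_Iic
    (fun s _ => ((hasDerivAt_exp s).const_mul q).hasDerivWithinAt) (injective_mul_exp hq).injOn]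
  simp only [abs_mul_exp_smul_comp_log hq, integral_const_mul]

lemma eqOn_comp_truncLog_Ioc_zero (h : ℝ → ℝ) (q s : ℝ) :
    EqOn (fun t => h (log (t / q))) (fun t => h (truncLog q t)) (Ioc 0 (min s q)) := fun t ht => by
  simp only [truncLog, min_eq_left (ht.2.trans (min_le_right s q))]

lemma eqOn_comp_truncLog_Ioc_min (h : ℝ → ℝ) (q s : ℝ) :
    EqOn (fun _ => h 0) (fun t => h (truncLog q t)) (Ioc (min s q) s) := fun t ht => by
  have hqt : q ≤ t := (min_lt_iff.1 ht.1).elim (fun hst => absurd ht.2 hst.not_ge) le_of_lt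
  simp only [truncLog_of_le hqt]

lemma intervalIntegrable_comp_truncLog_zero_min (hq : 0 ≤ q) (hs : 0 ≤ s)
    (hi : IntegrableOn (fun s => h s * exp s) (Iic 0)) :
    IntervalIntegrable (fun t => h (truncLog q t)) volume 0 (min s q) := by
  rcases (le_min hs hq).eq_or_lt with hm | hm
  · simp [← hm]
  obtain ⟨hs, hq⟩ := lt_min_iff.1 hm
  rw [intervalIntegrable_iff_integrableOn_Ioc_of_le hm.le]
  refine IntegrableOn.congr_fun ?_ (eqOn_comp_truncLog_Ioc_zero h q s) measurableSet_Ioc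
  rw [← mul_exp_truncLog hq hs, integrableOn_Ioc_comp_log_div_iff hq]
  exact hi.mono_set (Iic_subset_Iic.2 (truncLog_nonpos hq.le hs.le))

lemma integral_comp_truncLog_zero_min (hq : 0 ≤ q) (hs : 0 ≤ s) :
    ∫ t in (0 : ℝ)..min s q, h (truncLog q t) =
      min s q * exp (-truncLog q s) * ∫ a in Iic (truncLog q s), h a * exp a := by
  rcases (le_min hs hq).eq_or_lt with hm | hm
  · simp [← hm]
  obtain ⟨hs, hq⟩ := lt_min_iff.1 hm
  rw [intervalIntegral.integral_of_le hm.le,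
    ← setIntegral_congr_fun measurableSet_Ioc (eqOn_comp_truncLog_Ioc_zero h q s),
    ← mul_exp_truncLog hq hs, integral_Ioc_comp_log_div hq, mul_assoc q, ← exp_add,
    add_neg_cancel, exp_zero, mul_one]

lemma intervalIntegrable_comp_truncLog_min (h : ℝ → ℝ) (q s : ℝ) :
    IntervalIntegrable (fun t => h (truncLog q t)) volume (min s q) s :=
  (intervalIntegrable_iff_integrableOn_Ioc_of_le (min_le_left s q)).2
    ((integrableOn_const (by simp)).congr_fun (eqOn_comp_truncLog_Ioc_min h q s) measurableSet_Ioc)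

lemma intervalIntegrable_comp_truncLog {c d : ℝ} (hq : 0 ≤ q) (hc : 0 ≤ c) (hd : 0 ≤ d)
    (hi : IntegrableOn (fun s => h s * exp s) (Iic 0)) :
    IntervalIntegrable (fun t => h (truncLog q t)) volume c d := by
  have from_zero {s : ℝ} (hs : 0 ≤ s) : IntervalIntegrable (fun t => h (truncLog q t)) volume 0 s :=
    (intervalIntegrable_comp_truncLog_zero_min hq hs hi).trans
      (intervalIntegrable_comp_truncLog_min h q s)
  exact (from_zero hc).symm.trans (from_zero hd)

lemma integral_comp_truncLog (hq : 0 ≤ q) (hs : 0 ≤ s)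
    (hi : IntegrableOn (fun s => h s * exp s) (Iic 0)) :
    ∫ t in (0 : ℝ)..s, h (truncLog q t) =
      min s q * exp (-truncLog q s) * (∫ a in Iic (truncLog q s), h a * exp a) +
        (s - min s q) * h 0 := by
  rw [← intervalIntegral.integral_add_adjacent_intervals
    (intervalIntegrable_comp_truncLog_zero_min hq hs hi)
    (intervalIntegrable_comp_truncLog_min h q s), integral_comp_truncLog_zero_min hq hs,
    intervalIntegral.integral_of_le (min_le_left s q),
    ← setIntegral_congr_fun measurableSet_Ioc (eqOn_comp_truncLog_Ioc_min h q s)]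
  simp

lemma integrableOn_Iic_pow_mul_exp (k : ℕ) : IntegrableOn (fun s => s ^ k * exp s) (Iic 0) := by
  have gamma : IntegrableOn (fun s => s ^ k * exp (-s)) (Ici (-0)) := by
    rw [neg_zero, integrableOn_Ici_iff_integrableOn_Ioi]
    simpa [mul_comm] using GammaIntegral_convergent (s := k + 1) (by positivity)
  refine IntegrableOn.congr_fun (gamma.comp_neg_Iic.const_mul ((-1) ^ k)) (fun s _ => ?_)
    measurableSet_Iic
  simp only [neg_neg, ← mul_assoc, ← mul_pow, neg_mul_neg, one_mul]

lemma integral_Iic_pow_succ_mul_exp (k : ℕ) {a : ℝ} (ha : a ≤ 0) :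
    ∫ s in Iic a, s ^ (k + 1) * exp s =
      a ^ (k + 1) * exp a - (k + 1) * ∫ s in Iic a, s ^ k * exp s := by
  have hi (j : ℕ) : IntegrableOn (fun s => s ^ j * exp (s / 1)) (Iic a) := by
    simpa only [div_one] using
      (integrableOn_Iic_pow_mul_exp j).mono_set (Iic_subset_Iic.2 ha)
  have hi_deriv : IntegrableOn (fun s => (k + 1) * s ^ k * exp (s / 1)) (Iic a) := by
    simp only [mul_assoc]
    exact (hi k).const_mul _
  have by_parts := integral_Iic_deriv_mul_exp (g := fun s => s ^ (k + 1))
    (fun x y => by simp [integral_pow, mul_div_cancel₀ _ (Nat.cast_add_one_ne_zero (R := ℝ) k)])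
    (hi (k + 1)) hi_deriv
  simp only [div_one, mul_assoc, integral_const_mul] at by_parts
  linarith

lemma intervalIntegrable_truncLog_pow {c d : ℝ} (k : ℕ) (hq : 0 ≤ q) (hc : 0 ≤ c) (hd : 0 ≤ d) :
    IntervalIntegrable (fun t => truncLog q t ^ k) volume c d :=
  intervalIntegrable_comp_truncLog (h := fun s => s ^ k) hq hc hd (integrableOn_Iic_pow_mul_exp k)

lemma integral_truncLog_pow {c d : ℝ} (k : ℕ) (hq : 0 ≤ q) (hc : 0 ≤ c) (hd : 0 ≤ d) :
    ∫ t in c..d, truncLog q t ^ k = truncLogMoment k q d - truncLogMoment k q c :=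
  (intervalIntegral.integral_interval_sub_left (intervalIntegrable_truncLog_pow k hq le_rfl hd)
    (intervalIntegrable_truncLog_pow k hq le_rfl hc)).symm

lemma truncLogMoment_succ (k : ℕ) (hq : 0 ≤ q) (hs : 0 ≤ s) :
    truncLogMoment (k + 1) q s = min s q * exp (-truncLog q s) *
      ∫ a in Iic (truncLog q s), a ^ (k + 1) * exp a := by
  rw [truncLogMoment, integral_comp_truncLog (h := fun s => s ^ (k + 1)) hq hs
    (integrableOn_Iic_pow_mul_exp _), zero_pow k.succ_ne_zero, mul_zero, add_zero]

lemma truncLogMoment_one (hq : 0 ≤ q) (hs : 0 ≤ s) :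
    truncLogMoment 1 q s = min s q * (truncLog q s - 1) := by
  rw [truncLogMoment_succ 0 hq hs, integral_Iic_pow_succ_mul_exp 0 (truncLog_nonpos hq hs),
    exp_neg]
  simp only [pow_zero, one_mul, integral_exp_Iic]
  field_simp
  push_cast
  ring

lemma truncLogMoment_two (hq : 0 ≤ q) (hs : 0 ≤ s) :
    truncLogMoment 2 q s = min s q * (truncLog q s ^ 2 - 2 * truncLog q s + 2) := by
  have hlog := truncLog_nonpos hq hs
  rw [truncLogMoment_succ 1 hq hs, integral_Iic_pow_succ_mul_exp 1 hlog,
    integral_Iic_pow_succ_mul_exp 0 hlog, exp_neg]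
  simp only [pow_zero, one_mul, integral_exp_Iic]
  field_simp
  push_cast
  ring

lemma truncLogMoment_one_of_le (hq : 0 ≤ q) (hqs : q ≤ s) : truncLogMoment 1 q s = -q := by
  rw [truncLogMoment_one hq (hq.trans hqs), truncLog_of_le hqs, min_eq_right hqs]
  ring

lemma truncLogMoment_two_of_le (hq : 0 ≤ q) (hqs : q ≤ s) : truncLogMoment 2 q s = 2 * q := by
  rw [truncLogMoment_two hq (hq.trans hqs), truncLog_of_le hqs, min_eq_right hqs]
  ring

lemma truncLogMoment_one_of_ge (hs : 0 ≤ s) (hsq : s ≤ q) :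
    truncLogMoment 1 q s = s * (truncLog q s - 1) := by
  rw [truncLogMoment_one (hs.trans hsq) hs, min_eq_left hsq]

lemma truncLogMoment_two_of_ge (hs : 0 ≤ s) (hsq : s ≤ q) :
    truncLogMoment 2 q s = s * (truncLog q s ^ 2 - 2 * truncLog q s + 2) := by
  rw [truncLogMoment_two (hs.trans hsq) hs, min_eq_left hsq]

end TruncatedLogarithm

section LogarithmicOptimizer

/-- The extremal function of the John–Nirenberg type on `(0, 1)` with BMO norm one: logarithmic
tails on `(0, q)` and `(1 - p, 1)`, zero in between. -/
noncomputable def logOptimizer (p q t : ℝ) : ℝ := truncLog q t - truncLog p (1 - t)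

/-- `(d - c)²` times the amount by which the variance of `logOptimizer p q` over `(c, d)` falls
short of `1`, in terms of the moments of its two tails. -/
noncomputable def varianceGap (p q c d : ℝ) : ℝ :=
  (d - c) ^ 2 + ((truncLogMoment 1 q d - truncLogMoment 1 q c) -
      (truncLogMoment 1 p (1 - c) - truncLogMoment 1 p (1 - d))) ^ 2 -
    (d - c) * ((truncLogMoment 2 q d - truncLogMoment 2 q c) +
      (truncLogMoment 2 p (1 - c) - truncLogMoment 2 p (1 - d)))

variable {p q c d t : ℝ}

lemma truncLog_eq_zero_or (hpq : p + q ≤ 1) (t : ℝ) :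
    truncLog q t = 0 ∨ truncLog p (1 - t) = 0 :=
  (le_total q t).imp truncLog_of_le fun htq => truncLog_of_le (by linarith)

lemma varianceGap_reflect (p q c d : ℝ) :
    varianceGap p q c d = varianceGap q p (1 - d) (1 - c) := by
  simp only [varianceGap, sub_sub_cancel]
  ring

lemma varianceGap_nonneg_of_le (hp : 0 ≤ p) (hq : 0 ≤ q) (hc : 0 ≤ c) (hcd : c ≤ d)
    (hdp : d ≤ 1 - p) : 0 ≤ varianceGap p q c d := by
  have hd := hc.trans hcd
  have hc1 : p ≤ 1 - c := by linarith
  have hd1 : p ≤ 1 - d := by linarith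
  rw [varianceGap, truncLogMoment_one_of_le hp hc1, truncLogMoment_one_of_le hp hd1,
    truncLogMoment_two_of_le hp hc1, truncLogMoment_two_of_le hp hd1]
  rcases le_total d q with hdq | hqd
  · have hcq := hcd.trans hdq
    rw [truncLogMoment_one_of_ge hc hcq, truncLogMoment_one_of_ge hd hdq,
      truncLogMoment_two_of_ge hc hcq, truncLogMoment_two_of_ge hd hdq]
    have : 0 ≤ c * d * (truncLog q c - truncLog q d) ^ 2 := by positivity
    linarith
  rw [truncLogMoment_one_of_le hq hqd, truncLogMoment_two_of_le hq hqd]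
  rcases le_total c q with hcq | hqc
  · rw [truncLogMoment_one_of_ge hc hcq, truncLogMoment_two_of_ge hc hcq]
    have hs := truncLog_nonpos hq hc
    have quad_nonneg : 0 ≤ truncLog q c ^ 2 - 2 * truncLog q c := by nlinarith
    have := mul_nonneg hc (mul_nonneg (sub_nonneg.2 hqd) quad_nonneg)
    have : 0 ≤ (d - q) ^ 2 + c * q * truncLog q c ^ 2 := by positivity
    linarith
  · rw [truncLogMoment_one_of_le hq hqc, truncLogMoment_two_of_le hq hqc]
    linarith [sq_nonneg (d - c)]

lemma mul_sub_truncLog_sq_le {b : ℝ} (ht : 0 ≤ t) (htp : t ≤ p) (hb : 2 ≤ b) :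
    t * (b - truncLog p t) ^ 2 ≤ p * b ^ 2 := by
  rcases ht.eq_or_lt with rfl | ht
  · nlinarith [sq_nonneg b]
  have hlog := truncLog_nonpos (ht.le.trans htp) ht.le
  have exp_bound : b - truncLog p t ≤ b * exp (-truncLog p t / 2) := by
    nlinarith [add_one_le_exp (-truncLog p t / 2)]
  have exp_sq : t * exp (-truncLog p t / 2) ^ 2 = p := by
    rw [← exp_nat_mul, Nat.cast_ofNat, mul_div_cancel₀ _ two_ne_zero]
    nth_rw 1 [← min_eq_left htp]
    rw [← mul_exp_truncLog (ht.trans_le htp) ht, mul_assoc, ← exp_add, add_neg_cancel, exp_zero,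
      mul_one]
  calc t * (b - truncLog p t) ^ 2 ≤ t * (b * exp (-truncLog p t / 2)) ^ 2 := by
        gcongr
        linarith
    _ = p * b ^ 2 := by rw [mul_pow, mul_left_comm, exp_sq, mul_comm]

lemma varianceGap_nonneg_of_both_tails (hp : 0 ≤ p) (hq : 0 ≤ q) (hpq : p + q ≤ 1)
    (hgap : 0 ≤ (p - q) ^ 2 - 2 * (p + q) + 1) (hc : 0 ≤ c) (hcq : c ≤ q) (hdp : 1 - p ≤ d)
    (hd : d ≤ 1) : 0 ≤ varianceGap p q c d := by
  have hd0 : 0 ≤ 1 - d := by linarith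
  have hd1 : 1 - d ≤ p := by linarith
  have hc1 : p ≤ 1 - c := by linarith
  have hqd : q ≤ d := by linarith
  have hflat : 0 ≤ 1 - p - q := by linarith
  have key := mul_sub_truncLog_sq_le hd0 hd1 (by linarith [truncLog_nonpos hq hc] :
    2 ≤ 2 - truncLog q c)
  have left_log := truncLog_nonpos hq hc
  have right_log := truncLog_nonpos hp hd0
  rw [varianceGap, truncLogMoment_one_of_le hp hc1, truncLogMoment_one_of_ge hd0 hd1,
    truncLogMoment_two_of_le hp hc1, truncLogMoment_two_of_ge hd0 hd1,
    truncLogMoment_one_of_le hq hqd, truncLogMoment_one_of_ge hc hcq,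
    truncLogMoment_two_of_le hq hqd, truncLogMoment_two_of_ge hc hcq]
  generalize truncLog q c = σ at *
  generalize truncLog p (1 - d) = τ at *
  have quad_σ : 0 ≤ σ ^ 2 - 2 * σ := by nlinarith
  have quad_τ : 0 ≤ τ ^ 2 - 2 * τ := by nlinarith
  have left_nonneg : 0 ≤ c * (q * σ ^ 2 + (1 - p - q) * (σ ^ 2 - 2 * σ)) := by positivity
  have right_nonneg :
      0 ≤ (1 - d) * (p * τ ^ 2 + q * (2 - τ) ^ 2 + (1 - p - q) * (τ ^ 2 - 2 * τ)) := by positivity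
  linarith [mul_le_mul_of_nonneg_left key hc]

lemma varianceGap_nonneg (hp : 0 ≤ p) (hq : 0 ≤ q) (hpq : p + q ≤ 1)
    (hgap : 0 ≤ (p - q) ^ 2 - 2 * (p + q) + 1) (hc : 0 ≤ c) (hcd : c ≤ d) (hd : d ≤ 1) :
    0 ≤ varianceGap p q c d := by
  rcases le_total d (1 - p) with hdp | hdp
  · exact varianceGap_nonneg_of_le hp hq hc hcd hdp
  rcases le_total q c with hqc | hcq
  · rw [varianceGap_reflect]
    exact varianceGap_nonneg_of_le hq hp (by linarith) (by linarith) (by linarith)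
  · exact varianceGap_nonneg_of_both_tails hp hq hpq hgap hc hcq hdp hd

lemma logOptimizer_sq (hpq : p + q ≤ 1) (t : ℝ) :
    logOptimizer p q t ^ 2 = truncLog q t ^ 2 + truncLog p (1 - t) ^ 2 := by
  rcases truncLog_eq_zero_or hpq t with h | h <;> rw [logOptimizer, h] <;> ring

lemma intervalIntegrable_truncLog_one_sub_pow (k : ℕ) (hp : 0 ≤ p) (hc : c ≤ 1) (hd : d ≤ 1) :
    IntervalIntegrable (fun t => truncLog p (1 - t) ^ k) volume c d := by
  simpa only [sub_sub_cancel] using (intervalIntegrable_truncLog_pow k hp (sub_nonneg.2 hc)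
    (sub_nonneg.2 hd)).comp_sub_left 1

lemma integral_truncLog_one_sub_pow (k : ℕ) (hp : 0 ≤ p) (hc : c ≤ 1) (hd : d ≤ 1) :
    ∫ t in c..d, truncLog p (1 - t) ^ k =
      truncLogMoment k p (1 - c) - truncLogMoment k p (1 - d) := by
  rw [intervalIntegral.integral_comp_sub_left (fun t => truncLog p t ^ k) 1,
    integral_truncLog_pow k hp (sub_nonneg.2 hd) (sub_nonneg.2 hc)]

lemma intervalIntegrable_logOptimizer (hp : 0 ≤ p) (hq : 0 ≤ q) (hc : 0 ≤ c) (hcd : c ≤ d)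
    (hd : d ≤ 1) : IntervalIntegrable (logOptimizer p q) volume c d := by
  have hi := (intervalIntegrable_truncLog_pow 1 hq hc (hc.trans hcd)).sub
    (intervalIntegrable_truncLog_one_sub_pow 1 hp (hcd.trans hd) hd)
  simp only [pow_one] at hi
  exact hi

lemma intervalIntegrable_logOptimizer_sq (hp : 0 ≤ p) (hq : 0 ≤ q) (hpq : p + q ≤ 1) (hc : 0 ≤ c)
    (hcd : c ≤ d) (hd : d ≤ 1) :
    IntervalIntegrable (fun t => logOptimizer p q t ^ 2) volume c d := by
  simp only [logOptimizer_sq hpq]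
  exact (intervalIntegrable_truncLog_pow 2 hq hc (hc.trans hcd)).add
    (intervalIntegrable_truncLog_one_sub_pow 2 hp (hcd.trans hd) hd)

lemma integral_logOptimizer (hp : 0 ≤ p) (hq : 0 ≤ q) (hc : 0 ≤ c) (hcd : c ≤ d) (hd : d ≤ 1) :
    ∫ t in c..d, logOptimizer p q t = (truncLogMoment 1 q d - truncLogMoment 1 q c) -
      (truncLogMoment 1 p (1 - c) - truncLogMoment 1 p (1 - d)) := by
  have hd0 := hc.trans hcd
  have hc1 := hcd.trans hd
  rw [← integral_truncLog_pow 1 hq hc hd0, ← integral_truncLog_one_sub_pow 1 hp hc1 hd,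
    ← intervalIntegral.integral_sub (intervalIntegrable_truncLog_pow 1 hq hc hd0)
      (intervalIntegrable_truncLog_one_sub_pow 1 hp hc1 hd)]
  simp only [pow_one, logOptimizer]

lemma integral_logOptimizer_sq (hp : 0 ≤ p) (hq : 0 ≤ q) (hpq : p + q ≤ 1) (hc : 0 ≤ c)
    (hcd : c ≤ d) (hd : d ≤ 1) :
    ∫ t in c..d, logOptimizer p q t ^ 2 = (truncLogMoment 2 q d - truncLogMoment 2 q c) +
      (truncLogMoment 2 p (1 - c) - truncLogMoment 2 p (1 - d)) := by
  have hd0 := hc.trans hcd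
  have hc1 := hcd.trans hd
  rw [← integral_truncLog_pow 2 hq hc hd0, ← integral_truncLog_one_sub_pow 2 hp hc1 hd,
    ← intervalIntegral.integral_add (intervalIntegrable_truncLog_pow 2 hq hc hd0)
      (intervalIntegrable_truncLog_one_sub_pow 2 hp hc1 hd)]
  simp only [logOptimizer_sq hpq]

lemma memBMOe_logOptimizer (hp : 0 ≤ p) (hq : 0 ≤ q) (hpq : p + q ≤ 1)
    (hgap : 0 ≤ (p - q) ^ 2 - 2 * (p + q) + 1) : memBMOe 1 0 1 (logOptimizer p q) := by
  have hi := intervalIntegrable_logOptimizer hp hq le_rfl zero_le_one le_rfl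
  have hi2 := intervalIntegrable_logOptimizer_sq hp hq hpq le_rfl zero_le_one le_rfl
  rw [intervalIntegrable_iff_integrableOn_Ioo_of_le zero_le_one] at hi hi2
  refine ⟨hi, hi2, fun c d hc hcd hd => ?_⟩
  have gap := varianceGap_nonneg hp hq hpq hgap hc hcd.le hd
  have hdc : 0 < d - c := sub_pos.2 hcd
  rw [varianceGap, ← integral_logOptimizer hp hq hc hcd.le hd,
    ← integral_logOptimizer_sq hp hq hpq hc hcd.le hd] at gap
  simp only [intAvg]
  field_simp
  linarith

lemma bmoPoint_logOptimizer (hp : 0 ≤ p) (hq : 0 ≤ q) (hpq : p + q ≤ 1) :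
    bmoPoint (logOptimizer p q) 0 1 = (p - q, 2 * (p + q)) := by
  have zero_moment (k : ℕ) (r : ℝ) : truncLogMoment k r 0 = 0 := intervalIntegral.integral_same
  have hp1 : p ≤ 1 - 0 := by linarith
  have hq1 : q ≤ 1 := by linarith
  simp only [bmoPoint, intAvg, integral_logOptimizer hp hq le_rfl zero_le_one le_rfl,
    integral_logOptimizer_sq hp hq hpq le_rfl zero_le_one le_rfl, sub_self, zero_moment,
    truncLogMoment_one_of_le hp hp1, truncLogMoment_two_of_le hp hp1,
    truncLogMoment_one_of_le hq hq1, truncLogMoment_two_of_le hq hq1, Prod.mk.injEq]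
  constructor <;> ring

end LogarithmicOptimizer

section AffineSubstitution

variable {ε : ℝ} {f : ℝ → ℝ}

lemma image_add_const_mul_Iic_zero (hε : 0 < ε) (u : ℝ) :
    (fun s => u + ε * s) '' Iic 0 = Iic u := by
  simpa using ((OrderIso.mulLeft₀ ε hε).trans (OrderIso.addLeft u)).image_Iic 0

lemma injective_add_const_mul (hε : 0 < ε) (u : ℝ) : Function.Injective fun s => u + ε * s :=
  (add_right_injective u).comp (mul_right_injective₀ hε.ne')

lemma hasDerivAt_add_const_mul (ε u s : ℝ) : HasDerivAt (fun s => u + ε * s) ε s := by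
  simpa using ((hasDerivAt_id s).const_mul ε).const_add u

lemma abs_smul_comp_add_const_mul (hε : 0 < ε) (f : ℝ → ℝ) (u s : ℝ) :
    |ε| • (f (u + ε * s) * exp ((u + ε * s) / ε)) =
      ε * exp (u / ε) * (f (u + ε * s) * exp s) := by
  rw [abs_of_pos hε, add_div, mul_div_cancel_left₀ _ hε.ne', exp_add, smul_eq_mul]
  ring

lemma integrableOn_Iic_comp_add_const_mul_iff (hε : 0 < ε) (u : ℝ) :
    IntegrableOn (fun s => f (u + ε * s) * exp s) (Iic 0) ↔
      IntegrableOn (fun t => f t * exp (t / ε)) (Iic u) := by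
  rw [← image_add_const_mul_Iic_zero hε u, integrableOn_image_iff_integrableOn_abs_deriv_smul
    measurableSet_Iic (fun s _ => (hasDerivAt_add_const_mul ε u s).hasDerivWithinAt)
    (injective_add_const_mul hε u).injOn]
  simp only [abs_smul_comp_add_const_mul hε]
  exact (integrable_const_mul_iff (isUnit_iff_ne_zero.2 (by positivity)) _).symm

lemma integral_Iic_comp_add_const_mul (hε : 0 < ε) (u : ℝ) :
    ε * exp (u / ε) * ∫ s in Iic 0, f (u + ε * s) * exp s = ∫ t in Iic u, f t * exp (t / ε) := by
  rw [← image_add_const_mul_Iic_zero hε u, integral_image_eq_integral_abs_deriv_smul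
    measurableSet_Iic (fun s _ => (hasDerivAt_add_const_mul ε u s).hasDerivWithinAt)
    (injective_add_const_mul hε u).injOn]
  simp only [abs_smul_comp_add_const_mul hε, integral_const_mul]

end AffineSubstitution

namespace memWcl

variable {ε ε₀ p q : ℝ} {f f3 : ℝ → ℝ}

lemma integrableOn_Iic_comp_mul_exp (hf : memWcl ε₀ f f3) (hε : 0 < ε) (hεε₀ : ε ≤ ε₀) (u : ℝ) :
    IntegrableOn (fun s => f (u + ε * s) * exp s) (Iic 0) :=
  (integrableOn_Iic_comp_add_const_mul_iff hε u).2 (integrableOn_Iic_mul_exp hε hεε₀ hf.2.2.1 u)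

lemma intervalIntegrable_comp_truncLog (hf : memWcl ε₀ f f3) (hε : 0 < ε) (hεε₀ : ε ≤ ε₀)
    (hq : 0 ≤ q) (u : ℝ) :
    IntervalIntegrable (fun t => f (u + ε * truncLog q t)) volume 0 1 :=
  _root_.intervalIntegrable_comp_truncLog (h := fun s => f (u + ε * s)) hq le_rfl zero_le_one
    (hf.integrableOn_Iic_comp_mul_exp hε hεε₀ u)

lemma integral_comp_truncLog (hf : memWcl ε₀ f f3) (hε : 0 < ε) (hεε₀ : ε ≤ ε₀) (hq : 0 ≤ q)
    (hq1 : q ≤ 1) (u : ℝ) :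
    ∫ t in (0 : ℝ)..1, f (u + ε * truncLog q t) = f u - ε * q * mRinf ε f u := by
  have tail : ∫ s in Iic 0, f (u + ε * s) * exp s = f u - ε * mRinf ε f u := by
    have := integral_Iic_comp_add_const_mul (f := f) hε u
    rw [hf.integral_Iic_mul_exp hε hεε₀] at this
    exact mul_left_cancel₀ (by positivity) this
  rw [_root_.integral_comp_truncLog (h := fun s => f (u + ε * s)) hq zero_le_one
    (hf.integrableOn_Iic_comp_mul_exp hε hεε₀ u), truncLog_of_le hq1, min_eq_right hq1, tail]
  simp only [neg_zero, exp_zero, mul_zero, add_zero]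
  ring

lemma intervalIntegrable_comp_truncLog_one_sub (hf : memWcl ε₀ f f3) (hε : 0 < ε)
    (hεε₀ : ε ≤ ε₀) (hp : 0 ≤ p) (u : ℝ) :
    IntervalIntegrable (fun t => f (u - ε * truncLog p (1 - t))) volume 0 1 := by
  have := (hf.comp_neg.intervalIntegrable_comp_truncLog hε hεε₀ hp (-u)).symm.comp_sub_left 1
  simpa only [sub_self, sub_zero, neg_add, neg_neg, ← sub_eq_add_neg] using this

lemma integral_comp_truncLog_one_sub (hf : memWcl ε₀ f f3) (hε : 0 < ε) (hεε₀ : ε ≤ ε₀)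
    (hp : 0 ≤ p) (hp1 : p ≤ 1) (u : ℝ) :
    ∫ t in (0 : ℝ)..1, f (u - ε * truncLog p (1 - t)) = f u + ε * p * mLinf ε f u := by
  have reflected := hf.comp_neg.integral_comp_truncLog hε hεε₀ hp hp1 (-u)
  simp only [neg_add, neg_neg, ← sub_eq_add_neg] at reflected
  rw [intervalIntegral.integral_comp_sub_left (fun t => f (u - ε * truncLog p t)) 1, sub_self,
    sub_zero, reflected, mLinf_eq_neg_mRinf_comp_neg]
  ring

end memWcl

section Optimality

variable {ε ε₀ p q : ℝ} {f f3 : ℝ → ℝ}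

lemma comp_logOptimizer (hpq : p + q ≤ 1) (f : ℝ → ℝ) (ε u t : ℝ) :
    f (u + ε * logOptimizer p q t) =
      f (u + ε * truncLog q t) + f (u - ε * truncLog p (1 - t)) - f u := by
  rcases truncLog_eq_zero_or hpq t with h | h <;> simp [logOptimizer, h, sub_eq_add_neg (G := ℝ) u]

lemma intAvg_comp_logOptimizer (hf : memWcl ε₀ f f3) (hε : 0 < ε) (hεε₀ : ε ≤ ε₀) (hp : 0 ≤ p)
    (hq : 0 ≤ q) (hpq : p + q ≤ 1) (u : ℝ) :
    IntegrableOn (fun t => f (u + ε * logOptimizer p q t)) (Ioo 0 1) ∧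
      intAvg (fun t => f (u + ε * logOptimizer p q t)) 0 1 =
        f u - ε * q * mRinf ε f u + ε * p * mLinf ε f u := by
  have left_int := hf.intervalIntegrable_comp_truncLog hε hεε₀ hq u
  have right_int := hf.intervalIntegrable_comp_truncLog_one_sub hε hεε₀ hp u
  simp only [comp_logOptimizer hpq]
  constructor
  · rw [← intervalIntegrable_iff_integrableOn_Ioo_of_le zero_le_one]
    exact (left_int.add right_int).sub intervalIntegrable_const
  · rw [intAvg, intervalIntegral.integral_sub (left_int.add right_int) intervalIntegrable_const,
      intervalIntegral.integral_add left_int right_int,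
      hf.integral_comp_truncLog hε hεε₀ hq (by linarith),
      hf.integral_comp_truncLog_one_sub hε hεε₀ hp (by linarith), intervalIntegral.integral_const]
    simp only [sub_zero, one_smul, div_one]
    ring

/-- The length of one logarithmic tail of the optimizer with centre `u` for the point `x`: the right
tail for `e = ε`, the left one for `e = -ε`. It vanishes when `x` lies on the corresponding tangent
through `(u, u ^ 2)`. -/
noncomputable def tailLength (e u : ℝ) (x : ℝ × ℝ) : ℝ := tangentForm e u x / (4 * e ^ 2)

variable {u v : ℝ} {x : ℝ × ℝ}

lemma tailLength_nonneg (hx : x ∈ parabStrip ε) (hu : u ≤ uRpt ε x) : 0 ≤ tailLength ε u x := by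
  have hu' : u ≤ x.1 + ε + tangentRadius ε x := by
    linarith [uRpt_eq ε x, tangentRadius_nonneg ε x]
  rw [tailLength, tangentForm_eq_mul hx]
  exact div_nonneg (mul_nonneg_of_nonpos_of_nonpos (sub_nonpos.2 hu) (sub_nonpos.2 hu'))
    (by positivity)

lemma tailLength_neg_nonneg (hx : x ∈ parabStrip ε) (hu : uLpt ε x ≤ u) :
    0 ≤ tailLength (-ε) u x := by
  have hu' : x.1 - ε - tangentRadius ε x ≤ u := by
    linarith [uLpt_eq ε x, tangentRadius_nonneg ε x]
  rw [tailLength, tangentForm_neg_eq_mul hx]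
  exact div_nonneg (mul_nonneg (sub_nonneg.2 hu') (sub_nonneg.2 hu)) (by positivity)

lemma mul_tailLength_sub (hε : ε ≠ 0) (u : ℝ) (x : ℝ × ℝ) :
    ε * (tailLength ε u x - tailLength (-ε) u x) = x.1 - u := by
  simp only [tailLength, tangentForm]
  field_simp
  ring

lemma mul_tailLength_add (hε : ε ≠ 0) (u : ℝ) (x : ℝ × ℝ) :
    2 * ε ^ 2 * (tailLength ε u x + tailLength (-ε) u x) = x.2 - 2 * u * x.1 + u ^ 2 := by
  simp only [tailLength, tangentForm]
  field_simp
  ring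

lemma tailLength_add_le_one (hε : 0 < ε) (hx : x ∈ parabStrip ε)
    (hu : u ∈ Icc (uLpt ε x) (uRpt ε x)) : tailLength ε u x + tailLength (-ε) u x ≤ 1 := by
  have hρ := tangentRadius_nonneg ε x
  have hdist : (x.1 - u) ^ 2 ≤ (ε - tangentRadius ε x) ^ 2 :=
    sq_le_sq' (by linarith [hu.2, uRpt_eq ε x]) (by linarith [hu.1, uLpt_eq ε x])
  refine le_of_mul_le_mul_left ?_ (by positivity : 0 < 2 * ε ^ 2)
  rw [mul_tailLength_add hε.ne']
  linarith [sq_tangentRadius hx, mul_nonneg hε.le hρ]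

lemma tailLength_gap_nonneg (hε : 0 < ε) (hx : x ∈ parabStrip ε) (u : ℝ) :
    0 ≤ (tailLength ε u x - tailLength (-ε) u x) ^ 2 -
      2 * (tailLength ε u x + tailLength (-ε) u x) + 1 := by
  refine nonneg_of_mul_nonneg_right ?_ (by positivity : 0 < ε ^ 2)
  linear_combination hx.2 - (ε * (tailLength ε u x - tailLength (-ε) u x) + x.1 - u) *
    mul_tailLength_sub hε.ne' u x + mul_tailLength_add hε.ne' u x

/-- The function on `(0, 1)` with Bellman point `x` whose values concentrate at `u`. -/
noncomputable def bellmanOptimizer (ε u : ℝ) (x : ℝ × ℝ) (t : ℝ) : ℝ :=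
  u + ε * logOptimizer (tailLength ε u x) (tailLength (-ε) u x) t

lemma memBMOe_bellmanOptimizer (hε : 0 < ε) (hx : x ∈ parabStrip ε)
    (hu : u ∈ Icc (uLpt ε x) (uRpt ε x)) : memBMOe ε 0 1 (bellmanOptimizer ε u x) := by
  have := (memBMOe_logOptimizer (tailLength_nonneg hx hu.2)
    (tailLength_neg_nonneg hx hu.1) (tailLength_add_le_one hε hx hu)
    (tailLength_gap_nonneg hε hx u)).add_const_mul u ε
  rwa [mul_one] at this

lemma bmoPoint_bellmanOptimizer (hε : 0 < ε) (hx : x ∈ parabStrip ε)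
    (hu : u ∈ Icc (uLpt ε x) (uRpt ε x)) : bmoPoint (bellmanOptimizer ε u x) 0 1 = x := by
  have hp := tailLength_nonneg hx hu.2
  have hq := tailLength_neg_nonneg hx hu.1
  have hpq := tailLength_add_le_one hε hx hu
  have hsub := mul_tailLength_sub hε.ne' u x
  unfold bellmanOptimizer
  rw [bmoPoint_add_const_mul one_pos
    (intervalIntegrable_logOptimizer hp hq le_rfl zero_le_one le_rfl)
    (intervalIntegrable_logOptimizer_sq hp hq hpq le_rfl zero_le_one le_rfl),
    bmoPoint_logOptimizer hp hq hpq]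
  ext
  · linear_combination hsub
  · linear_combination 2 * u * hsub + mul_tailLength_add hε.ne' u x

namespace IsAngle

lemma bellmanCandidate_eq_tailLength (h : IsAngle ε f v) (hx : x ∈ parabStrip ε)
    (hu : u = supportParam ε v x) :
    bellmanCandidate ε f v x =
      f u - ε * tailLength (-ε) u x * mRinf ε f u + ε * tailLength ε u x * mLinf ε f u := by
  have hε := h.pos.ne'
  have form_neg (u : ℝ) : tangentForm (-ε) u x = tangentForm ε u x - 4 * ε * (x.1 - u) := by
    simp only [tangentForm]
    ring
  subst hu
  simp only [tailLength]
  rcases le_total (uRpt ε x) v with hR | hR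
  · rw [h.bellmanCandidate_of_uRpt_le hx hR, supportParam_of_uRpt_le h.pos.le hx.1 hR, form_neg,
      tangentForm_eq_mul hx]
    field_simp
    ring
  rcases le_total v (uLpt ε x) with hL | hL
  · rw [h.bellmanCandidate_of_le_uLpt hx hL, supportParam_of_le_uLpt h.pos.le hx.1 hL,
      eq_add_of_sub_eq (form_neg _).symm, tangentForm_neg_eq_mul hx]
    field_simp
    ring
  · rw [h.bellmanCandidate_of_mem hL hR, supportParam_of_mem hL hR, tangentForm, tangentForm]
    field_simp
    ring

lemma isGreatest_bellmanCandidate (h : IsAngle ε f v) (hf : memWcl ε₀ f f3) (hεε₀ : ε ≤ ε₀)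
    (hx : x ∈ parabStrip ε) :
    IsGreatest {y | ∃ φ : ℝ → ℝ, memBMOe ε 0 1 φ ∧ IntegrableOn (fun t => f (φ t)) (Ioo 0 1) ∧
      intAvg φ 0 1 = x.1 ∧ intAvg (fun t => φ t ^ 2) 0 1 = x.2 ∧
      y = intAvg (fun t => f (φ t)) 0 1} (bellmanCandidate ε f v x) := by
  constructor
  · have hu := supportParam_mem_Icc h.pos.le hx.1 v
    have hpoint := bmoPoint_bellmanOptimizer h.pos hx hu
    obtain ⟨hint, havg⟩ := intAvg_comp_logOptimizer hf h.pos hεε₀ (tailLength_nonneg hx hu.2)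
      (tailLength_neg_nonneg hx hu.1) (tailLength_add_le_one h.pos hx hu) (supportParam ε v x)
    exact ⟨bellmanOptimizer ε (supportParam ε v x) x, memBMOe_bellmanOptimizer h.pos hx hu, hint,
      congrArg Prod.fst hpoint, congrArg Prod.snd hpoint,
      (h.bellmanCandidate_eq_tailLength hx rfl).trans havg.symm⟩
  · rintro _ ⟨φ, hφ, hi, h1, h2, rfl⟩
    have bound := hφ.intAvg_le one_pos h.pos h.locallyConcaveOn_bellmanCandidate
      h.continuous_bellmanCandidate
    simp only [bellmanCandidate_self_sq h.pos.le, bmoPoint, h1, h2] at bound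
    exact bound hi

lemma bellmanFn_eq (h : IsAngle ε f v) (hf : memWcl ε₀ f f3) (hεε₀ : ε ≤ ε₀)
    (hx : x ∈ parabStrip ε) : bellmanFn ε f x.1 x.2 = bellmanCandidate ε f v x :=
  (h.isGreatest_bellmanCandidate hf hεε₀ hx).csSup_eq

end IsAngle

end Optimality

theorem stmt13 (ε ε₀ : ℝ) (hε : 0 < ε) (hεε₀ : ε < ε₀) (f f3 : ℝ → ℝ)
    (hf : memWcl ε₀ f f3) (v : ℝ)
    (hR : ∀ u : ℝ, u ≤ v → (∫ t in Iic u, f3 t * Real.exp (t / ε)) ≤ 0)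
    (hL : ∀ u : ℝ, v ≤ u → 0 ≤ ∫ t in Ici u, f3 t * Real.exp (-t / ε))
    (hbal : Real.exp (-v / ε) * (∫ t in Iic v, f3 t * Real.exp (t / ε)) +
        Real.exp (v / ε) * (∫ t in Ici v, f3 t * Real.exp (-t / ε)) = 0) :
    ∀ x ∈ parabStrip ε,
      (uRpt ε x ≤ v →
        bellmanFn ε f x.1 x.2 =
          mRinf ε f (uRpt ε x) * (x.1 - uRpt ε x) + f (uRpt ε x)) ∧
      (uLpt ε x ≤ v → v ≤ uRpt ε x →
        bellmanFn ε f x.1 x.2 =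
          ((mRinf ε f v + mLinf ε f v) / 2 -
              v * (mLinf ε f v - mRinf ε f v) / (2 * ε)) * x.1 +
            ((mLinf ε f v - mRinf ε f v) / (4 * ε)) * x.2 +
            (v ^ 2 * (mLinf ε f v - mRinf ε f v) / (4 * ε) -
              v * (mRinf ε f v + mLinf ε f v) / 2 + f v)) ∧
      (v ≤ uLpt ε x →
        bellmanFn ε f x.1 x.2 =
          mLinf ε f (uLpt ε x) * (x.1 - uLpt ε x) + f (uLpt ε x)) := by
  intro x hx
  have angle := hf.isAngle hε hεε₀.le hR hL hbal
  rw [angle.bellmanFn_eq hf hεε₀.le hx]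
  exact ⟨angle.bellmanCandidate_of_uRpt_le hx, angle.bellmanCandidate_of_mem,
    angle.bellmanCandidate_of_le_uLpt hx⟩
end

section
/- Let 0 < ε < ε₀ and let f ∈ 𝔚_{ε₀} be such that for some v₁ ∈ ℝ, f''' < 0 almost everywhere on (−∞, v₁) and f''' > 0 almost everywhere on (v₁, +∞). Define g_ε(u) = ∫_ℝ f'''(t)e^{−|u−t|/ε}dt. Then g_ε is continuous on ℝ, and: (1) if g_ε(u) < 0 for all u ∈ ℝ, then ∫_{−∞}^u f'''(t)e^{t/ε}dt ≤ 0 for all u ∈ ℝ; (2) if g_ε(u) > 0 for all u ∈ ℝ, then ∫_u^{+∞} f'''(t)e^{−t/ε}dt ≥ 0 for all u ∈ ℝ; (3) if g_ε(v) = 0 for some v ∈ ℝ, then ∫_{−∞}^u f'''(t)e^{t/ε}dt ≤ 0 for all u ≤ v, ∫_u^{+∞} f'''(t)e^{−t/ε}dt ≥ 0 for all u ≥ v, and e^{−v/ε}∫_{−∞}^v f'''(t)e^{t/ε}dt + e^{v/ε}∫_v^{+∞} f'''(t)e^{−t/ε}dt = 0. -/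
open MeasureTheory Set Real

/-!
Write `φ = f3` and `a = 1 / ε`. Splitting the kernel `e^{-a|u - t|}` at `t = u` gives
`g(u) = e^{-au} L(u) + e^{au} R(u)`, where `L(u) = ∫_{-∞}^u φ(t) e^{at} dt` and
`R(u) = ∫_u^∞ φ(t) e^{-at} dt`. Since `φ` is nonpositive before `c` and nonnegative after it,
`L ≤ 0` before `c` and `L` is nondecreasing after `c`, whereas `R ≥ 0` after `c`. If `g(v) ≤ 0` with
`v ≥ c`, then `R(v) ≥ 0` forces `L(v) ≤ 0`, and monotonicity carries this back to all `u` in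
`[c, v]`. The claim on `R` is the mirror image under `φ ↦ -φ(-·)`, which preserves the sign pattern.
-/

/-- The two-sided exponential transform of `φ` with rate `a`; the paper's `g_ε` is the case
`φ = f3`, `a = 1 / ε`. -/
noncomputable def expConv (a : ℝ) (φ : ℝ → ℝ) (u : ℝ) : ℝ :=
  ∫ t : ℝ, φ t * exp (-|u - t| * a)

/-- The integral of `φ` over `(-∞, u]` against `e^{at}`, the part of `expConv` coming from the left
of `u` up to the factor `e^{-au}`. -/
noncomputable def leftTail (a : ℝ) (φ : ℝ → ℝ) (u : ℝ) : ℝ :=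
  ∫ t in Iic u, φ t * exp (t * a)

/-- The integral of `φ` over `[u, ∞)` against `e^{-at}`, the part of `expConv` coming from the right
of `u` up to the factor `e^{au}`. -/
noncomputable def rightTail (a : ℝ) (φ : ℝ → ℝ) (u : ℝ) : ℝ :=
  ∫ t in Ici u, φ t * exp (-t * a)

/-- `φ` changes sign from `-` to `+` at `c`, in the weak sense: almost everywhere, it is nonpositive
to the left of `c` and nonnegative to the right of `c`. -/
structure SignChangeAt (φ : ℝ → ℝ) (c : ℝ) : Prop where
  nonpos : ∀ᵐ t, t < c → φ t ≤ 0
  nonneg : ∀ᵐ t, c < t → 0 ≤ φ t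

section Weights

theorem norm_mul_exp_le_of_le_add {x p q C : ℝ} (h : q ≤ p + C) :
    ‖x * exp q‖ ≤ exp C * ‖x * exp p‖ := by
  calc ‖x * exp q‖ = ‖x‖ * exp q := by rw [norm_mul, norm_of_nonneg (exp_nonneg q)]
    _ ≤ ‖x‖ * exp (p + C) := by gcongr
    _ = exp C * ‖x * exp p‖ := by rw [norm_mul, norm_of_nonneg (exp_nonneg p), exp_add]; ring

theorem integrable_mul_exp_of_le_add {α : Type*} [MeasurableSpace α] {μ : Measure α}
    {φ p q : α → ℝ} {C : ℝ} (hφ : Integrable (fun t => φ t * exp (p t)) μ)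
    (hp : Measurable p) (hq : Measurable q) (h : ∀ t, q t ≤ p t + C) :
    Integrable (fun t => φ t * exp (q t)) μ := by
  have hmeas : AEStronglyMeasurable (fun t => φ t * exp (q t)) μ := by
    have hquot : Measurable fun t => exp (q t - p t) := by fun_prop
    refine (hφ.aestronglyMeasurable.mul hquot.aestronglyMeasurable).congr (.of_forall fun t => ?_)
    rw [Pi.mul_apply, mul_assoc, ← exp_add, add_sub_cancel]
  exact (hφ.norm.const_mul (exp C)).mono' hmeas
    (.of_forall fun t => norm_mul_exp_le_of_le_add (h t))

theorem neg_abs_sub_mul_le (a u t : ℝ) : -|u - t| * a ≤ -|t| * a + |u| * |a| := by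
  have hdiff : |(|t| - |t - u|)| ≤ |u| := by
    simpa only [sub_sub_cancel] using abs_abs_sub_abs_le t (t - u)
  have hmul : (|t| - |t - u|) * a ≤ |u| * |a| :=
    calc (|t| - |t - u|) * a ≤ |(|t| - |t - u|) * a| := le_abs_self _
      _ = |(|t| - |t - u|)| * |a| := abs_mul _ _
      _ ≤ |u| * |a| := by gcongr
  rw [abs_sub_comm u t]
  linarith

theorem exp_neg_abs_sub_mul_of_le {t u : ℝ} (a : ℝ) (h : t ≤ u) :
    exp (-|u - t| * a) = exp (-u * a) * exp (t * a) := by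
  rw [abs_of_nonneg (sub_nonneg.2 h), ← exp_add]
  ring_nf

theorem exp_neg_abs_sub_mul_of_ge {t u : ℝ} (a : ℝ) (h : u ≤ t) :
    exp (-|u - t| * a) = exp (u * a) * exp (-t * a) := by
  rw [abs_of_nonpos (sub_nonpos.2 h), ← exp_add]
  ring_nf

theorem integrable_mul_exp_neg_abs_mono {φ : ℝ → ℝ} {a b : ℝ} (hab : a ≤ b)
    (hφ : Integrable fun t => φ t * exp (-|t| * a)) :
    Integrable fun t => φ t * exp (-|t| * b) := by
  refine integrable_mul_exp_of_le_add (C := 0) hφ (by fun_prop) (by fun_prop) fun t => ?_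
  have := mul_le_mul_of_nonneg_left hab (abs_nonneg t)
  linarith

end Weights

section Transform

variable {a : ℝ} {φ : ℝ → ℝ}

theorem integrable_mul_exp_neg_abs_sub (hφ : Integrable fun t => φ t * exp (-|t| * a)) (u : ℝ) :
    Integrable fun t => φ t * exp (-|u - t| * a) :=
  integrable_mul_exp_of_le_add hφ (by fun_prop) (by fun_prop) (neg_abs_sub_mul_le a u)

theorem continuous_expConv (hφ : Integrable fun t => φ t * exp (-|t| * a)) :
    Continuous (expConv a φ) := by
  refine continuous_iff_continuousAt.2 fun u₀ => ?_
  have hnear : ∀ᶠ u in nhds u₀, |u| < |u₀| + 1 :=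
    continuous_abs.continuousAt.eventually_lt_const (lt_add_one _)
  refine continuousAt_of_dominated
    (bound := fun t => exp ((|u₀| + 1) * |a|) * ‖φ t * exp (-|t| * a)‖)
    (.of_forall fun u => (integrable_mul_exp_neg_abs_sub hφ u).aestronglyMeasurable) ?_
    (hφ.norm.const_mul _) (.of_forall fun t => by fun_prop)
  filter_upwards [hnear] with u hu
  refine .of_forall fun t => norm_mul_exp_le_of_le_add ((neg_abs_sub_mul_le a u t).trans ?_)
  gcongr

theorem integrableOn_Iic_mul_exp_s14 (hφ : Integrable fun t => φ t * exp (-|t| * a)) (u : ℝ) :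
    IntegrableOn (fun t => φ t * exp (t * a)) (Iic u) := by
  refine ((integrable_mul_exp_neg_abs_sub hφ u).const_mul (exp (u * a))).integrableOn.congr_fun
    (fun t ht => ?_) measurableSet_Iic
  beta_reduce
  rw [exp_neg_abs_sub_mul_of_le a ht, neg_mul, exp_neg]
  field_simp

theorem expConv_eq_tails (hφ : Integrable fun t => φ t * exp (-|t| * a)) (u : ℝ) :
    expConv a φ u = exp (-u * a) * leftTail a φ u + exp (u * a) * rightTail a φ u := by
  have hint := integrable_mul_exp_neg_abs_sub hφ u
  have hleft : ∫ t in Iic u, φ t * exp (-|u - t| * a) = exp (-u * a) * leftTail a φ u := by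
    rw [leftTail, ← integral_const_mul]
    refine setIntegral_congr_fun measurableSet_Iic fun t ht => ?_
    rw [exp_neg_abs_sub_mul_of_le a ht, mul_left_comm]
  have hright : ∫ t in Ici u, φ t * exp (-|u - t| * a) = exp (u * a) * rightTail a φ u := by
    rw [rightTail, ← integral_const_mul]
    refine setIntegral_congr_fun measurableSet_Ici fun t ht => ?_
    rw [exp_neg_abs_sub_mul_of_ge a ht, mul_left_comm]
  rw [← hleft, ← hright, integral_Ici_eq_integral_Ioi,
    intervalIntegral.integral_Iic_add_Ioi hint.integrableOn hint.integrableOn, expConv]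

end Transform

section Reflection

variable (a : ℝ) (φ : ℝ → ℝ) (u : ℝ)

theorem expConv_reflect : expConv a (fun t => -φ (-t)) (-u) = -expConv a φ u := by
  rw [expConv, expConv, ← integral_neg, ← integral_neg_eq_self]
  refine integral_congr_ae (.of_forall fun t => ?_)
  simp only [neg_neg, neg_mul, ← abs_neg (u - t), neg_sub, sub_neg_eq_add, neg_add_eq_sub]

theorem leftTail_reflect : leftTail a (fun t => -φ (-t)) (-u) = -rightTail a φ u := by
  have hcomp := integral_comp_neg_Iic (-u) fun t => -(φ t * exp (-t * a))
  rw [rightTail, integral_Ici_eq_integral_Ioi, ← integral_neg]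
  simpa only [leftTail, neg_neg, neg_mul] using hcomp

variable {a φ}

theorem integrable_mul_exp_neg_abs_reflect (hφ : Integrable fun t => φ t * exp (-|t| * a)) :
    Integrable fun t => -φ (-t) * exp (-|t| * a) := by
  simpa only [Pi.neg_def, abs_neg, neg_mul] using hφ.comp_neg.neg

theorem SignChangeAt.reflect {c : ℝ} (h : SignChangeAt φ c) :
    SignChangeAt (fun t => -φ (-t)) (-c) where
  nonpos := by
    filter_upwards [(Measure.measurePreserving_neg volume).quasiMeasurePreserving.ae h.nonneg]
      with t ht htc
    exact neg_nonpos.2 (ht (lt_neg_of_lt_neg htc))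
  nonneg := by
    filter_upwards [(Measure.measurePreserving_neg volume).quasiMeasurePreserving.ae h.nonpos]
      with t ht htc
    exact neg_nonneg.2 (ht (neg_lt.1 htc))

end Reflection

namespace SignChangeAt

variable {a c u v : ℝ} {φ : ℝ → ℝ}

theorem leftTail_nonpos (h : SignChangeAt φ c) (a : ℝ) (hu : u ≤ c) : leftTail a φ u ≤ 0 := by
  rw [leftTail, integral_Iic_eq_integral_Iio]
  refine setIntegral_nonpos_ae measurableSet_Iio ?_
  filter_upwards [h.nonpos] with t ht htu
  exact mul_nonpos_of_nonpos_of_nonneg (ht (htu.trans_le hu)) (exp_nonneg _)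

theorem rightTail_nonneg (h : SignChangeAt φ c) (a : ℝ) (hu : c ≤ u) : 0 ≤ rightTail a φ u := by
  simpa only [leftTail_reflect, neg_nonpos] using h.reflect.leftTail_nonpos a (neg_le_neg hu)

theorem leftTail_mono (h : SignChangeAt φ c) (hφ : Integrable fun t => φ t * exp (-|t| * a))
    (hu : c ≤ u) (huv : u ≤ v) : leftTail a φ u ≤ leftTail a φ v := by
  rw [← sub_nonneg, leftTail, leftTail, intervalIntegral.integral_Iic_sub_Iic
    (integrableOn_Iic_mul_exp_s14 hφ u) (integrableOn_Iic_mul_exp_s14 hφ v),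
    intervalIntegral.integral_of_le huv]
  refine setIntegral_nonneg_ae measurableSet_Ioc ?_
  filter_upwards [h.nonneg] with t ht htuv
  exact mul_nonneg (ht (hu.trans_lt htuv.1)) (exp_nonneg _)

theorem leftTail_nonpos_of_expConv_nonpos (h : SignChangeAt φ c)
    (hφ : Integrable fun t => φ t * exp (-|t| * a)) (hv : expConv a φ v ≤ 0) (huv : u ≤ v) :
    leftTail a φ u ≤ 0 := by
  rcases le_total u c with huc | hcu
  · exact h.leftTail_nonpos a huc
  · have hright : 0 ≤ exp (v * a) * rightTail a φ v :=
      mul_nonneg (exp_nonneg _) (h.rightTail_nonneg a (hcu.trans huv))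
    have hleft : exp (-v * a) * leftTail a φ v ≤ 0 := by
      linarith [expConv_eq_tails hφ v]
    exact (h.leftTail_mono hφ hcu huv).trans (nonpos_of_mul_nonpos_right hleft (exp_pos _))

theorem rightTail_nonneg_of_expConv_nonneg (h : SignChangeAt φ c)
    (hφ : Integrable fun t => φ t * exp (-|t| * a)) (hv : 0 ≤ expConv a φ v) (hvu : v ≤ u) :
    0 ≤ rightTail a φ u := by
  have hv_reflect : expConv a (fun t => -φ (-t)) (-v) ≤ 0 := by
    rwa [expConv_reflect, neg_nonpos]
  simpa only [leftTail_reflect, neg_nonpos] using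
    h.reflect.leftTail_nonpos_of_expConv_nonpos (integrable_mul_exp_neg_abs_reflect hφ) hv_reflect
      (neg_le_neg hvu)

end SignChangeAt

theorem stmt14_general {a c : ℝ} {φ : ℝ → ℝ} (hφ : Integrable fun t => φ t * exp (-|t| * a))
    (hc : SignChangeAt φ c) :
    Continuous (expConv a φ) ∧
    (∀ v, expConv a φ v ≤ 0 → ∀ u ≤ v, leftTail a φ u ≤ 0) ∧
    (∀ v, 0 ≤ expConv a φ v → ∀ u, v ≤ u → 0 ≤ rightTail a φ u) ∧
    ∀ v, exp (-v * a) * leftTail a φ v + exp (v * a) * rightTail a φ v = expConv a φ v :=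
  ⟨continuous_expConv hφ,
    fun _ hv _ => hc.leftTail_nonpos_of_expConv_nonpos hφ hv,
    fun _ hv _ => hc.rightTail_nonneg_of_expConv_nonneg hφ hv,
    fun v => (expConv_eq_tails hφ v).symm⟩

theorem stmt14 (ε ε₀ : ℝ) (hε : 0 < ε) (hεε₀ : ε < ε₀) (f f3 : ℝ → ℝ)
    (hf : memWcl ε₀ f f3) (v₁ : ℝ)
    (hneg : ∀ᵐ t ∂volume.restrict (Iio v₁), f3 t < 0)
    (hpos : ∀ᵐ t ∂volume.restrict (Ioi v₁), 0 < f3 t) :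
    Continuous (fun u => ∫ t : ℝ, f3 t * Real.exp (-|u - t| / ε)) ∧
    ((∀ u : ℝ, (∫ t : ℝ, f3 t * Real.exp (-|u - t| / ε)) < 0) →
      ∀ u : ℝ, (∫ t in Iic u, f3 t * Real.exp (t / ε)) ≤ 0) ∧
    ((∀ u : ℝ, 0 < ∫ t : ℝ, f3 t * Real.exp (-|u - t| / ε)) →
      ∀ u : ℝ, 0 ≤ ∫ t in Ici u, f3 t * Real.exp (-t / ε)) ∧
    (∀ v : ℝ, (∫ t : ℝ, f3 t * Real.exp (-|v - t| / ε)) = 0 →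
      (∀ u : ℝ, u ≤ v → (∫ t in Iic u, f3 t * Real.exp (t / ε)) ≤ 0) ∧
      (∀ u : ℝ, v ≤ u → 0 ≤ ∫ t in Ici u, f3 t * Real.exp (-t / ε)) ∧
      Real.exp (-v / ε) * (∫ t in Iic v, f3 t * Real.exp (t / ε)) +
        Real.exp (v / ε) * (∫ t in Ici v, f3 t * Real.exp (-t / ε)) = 0) := by
  obtain ⟨-, -, -, -, -, hf3⟩ := hf
  simp only [div_eq_mul_inv] at hf3 ⊢
  have hint := integrable_mul_exp_neg_abs_mono (inv_anti₀ hε hεε₀.le) hf3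
  have hsign : SignChangeAt f3 v₁ :=
    ⟨(ae_imp_of_ae_restrict hneg).mono fun _ ht h => (ht h).le,
      (ae_imp_of_ae_restrict hpos).mono fun _ ht h => (ht h).le⟩
  obtain ⟨hcont, hleft, hright, htails⟩ := stmt14_general hint hsign
  exact ⟨hcont, fun h u => hleft u (h u).le u le_rfl, fun h u => hright u (h u).le u le_rfl,
    fun v hv => ⟨hleft v hv.le, hright v hv.ge, (htails v).trans hv⟩⟩
end
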